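/- arXiv:1108.5930 — 3 statements merged into one kernel-verified Lean document; each statement's English description precedes it below -/
import Mathlib

section
/- (Sums of squares SDP duality.) Let L be a linear pencil of size m in n variables and f ∈ ℝ[X₁,…,Xₙ]₁ a linear polynomial. Let s(d) denote the number of monomials of degree at most d in n variables and let [X]_d ∈ ℝ[X₁,…,Xₙ]^(s(d)) be the column vector of these monomials. Then f ≥ 0 on S_L if and only if there exist quadratic sos-matrices S₁,…,Sₙ ∈ ℝ[X₁,…,Xₙ]^(m×m), symmetric matrices U₁,…,Uₙ ∈ ℝ^(s(1)×s(1)), matrices W₁,…,Wₙ ∈ ℝ^(s(2)×s(1)), a positive semidefinite matrix S ∈ ℝ^(m×m), and c ≥ 0 such that, with W₀ := 0: (1) [X]₁ᵀ Uᵢ [X]₁ + [X]₂ᵀ W_{i−1} [X]₁ + tr(L·Sᵢ) = 0 for all i ∈ {1,…,n}; (2) Uᵢ − WᵢᵀWᵢ is positive semidefinite for all i ∈ {1,…,n}; (3) f − c + [X]₂ᵀ Wₙ [X]₁ − tr(L·S) = 0. -/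
open MvPolynomial Matrix

/-- The linear pencil `L = A 0 + X 1 * A 1 + ... + X n * A n` as a symmetric matrix
with entries in the polynomial ring `ℝ[X 1, ..., X n]`. -/
noncomputable def pencilPoly {n m : ℕ} (A : Fin (n+1) → Matrix (Fin m) (Fin m) ℝ) :
    Matrix (Fin m) (Fin m) (MvPolynomial (Fin n) ℝ) :=
  fun a b => MvPolynomial.C (A 0 a b) + ∑ i : Fin n, MvPolynomial.X i * MvPolynomial.C (A i.succ a b)

/-- Evaluation of the pencil at a point `x ∈ ℝⁿ`. -/
def pencilEval {n m : ℕ} (A : Fin (n+1) → Matrix (Fin m) (Fin m) ℝ) (x : Fin n → ℝ) :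
    Matrix (Fin m) (Fin m) ℝ :=
  A 0 + ∑ i : Fin n, x i • A i.succ

/-- The spectrahedron `S_L = {x ∈ ℝⁿ ∣ L(x) ⪰ 0}`. -/
def specSet {n m : ℕ} (A : Fin (n+1) → Matrix (Fin m) (Fin m) ℝ) : Set (Fin n → ℝ) :=
  {x | (pencilEval A x).PosSemidef}

/-- `vᵀ L v` for a vector `v` of polynomials. -/
noncomputable def vLv {n m : ℕ} (A : Fin (n+1) → Matrix (Fin m) (Fin m) ℝ)
    (v : Fin m → MvPolynomial (Fin n) ℝ) : MvPolynomial (Fin n) ℝ :=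
  ∑ a : Fin m, ∑ b : Fin m, v a * pencilPoly A a b * v b

/-- Membership in the quadratic module `M_L` associated to the pencil `L`:
`p = s + Σⱼ vⱼᵀ L vⱼ` with `s` a sum of squares. -/
def memQM {n m : ℕ} (A : Fin (n+1) → Matrix (Fin m) (Fin m) ℝ)
    (p : MvPolynomial (Fin n) ℝ) : Prop :=
  ∃ (k r : ℕ) (q : Fin k → MvPolynomial (Fin n) ℝ)
    (v : Fin r → Fin m → MvPolynomial (Fin n) ℝ),
    p = ∑ i, (q i)^2 + ∑ j, vLv A (v j)

/-- An sos-matrix: a matrix polynomial of the form `Pᵀ P`. -/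
def IsSosMatrix {n m : ℕ} (S : Matrix (Fin m) (Fin m) (MvPolynomial (Fin n) ℝ)) : Prop :=
  ∃ (s : ℕ) (P : Matrix (Fin s) (Fin m) (MvPolynomial (Fin n) ℝ)), S = Pᵀ * P

/-- The column vector `[X]_d` of all monomials of degree at most `d` in `n` variables,
indexed by `Sym (Fin (n+1)) d` (multisets of size `d` over `{0, 1, …, n}`, where the
index `0` plays the role of a homogenizing variable evaluated at `1`): the map sending
such a multiset to the corresponding monomial is a bijection onto the monomials of degree
at most `d`, and `Fintype.card (Sym (Fin (n+1)) d) = (d+n).choose n = s(d)`. -/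
noncomputable def monVec (n d : ℕ) : Sym (Fin (n+1)) d → MvPolynomial (Fin n) ℝ :=
  fun s => (Multiset.map (fun i : Fin (n+1) =>
      Fin.cases (motive := fun _ => MvPolynomial (Fin n) ℝ) 1 (fun j => MvPolynomial.X j) i)
      (s : Multiset (Fin (n+1)))).prod

/-- The scalar polynomial `[X]_eᵀ W [X]_d` for a real matrix `W`. -/
noncomputable def quadFormPoly {n d e : ℕ}
    (W : Matrix (Sym (Fin (n+1)) e) (Sym (Fin (n+1)) d) ℝ) : MvPolynomial (Fin n) ℝ :=
  ∑ a, ∑ b, MvPolynomial.C (W a b) * monVec n e a * monVec n d b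

/-- The affine-linear polynomial with coefficient vector `v` along the monomials `[X]₁`. -/
noncomputable def linPoly (n : ℕ) :
    (Sym (Fin (n+1)) 1 → ℝ) →ₗ[ℝ] MvPolynomial (Fin n) ℝ :=
  Fintype.linearCombination ℝ (monVec n 1)

/-- The coefficient vector of the constant polynomial `1`. -/
def constVec (n : ℕ) : Sym (Fin (n+1)) 1 → ℝ := Pi.single (Sym.oneEquiv 0) 1

/-- The coefficient vector of `tr (L S)` for a constant matrix `S`. -/
def traceVec {n m : ℕ} (A : Fin (n+1) → Matrix (Fin m) (Fin m) ℝ) :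
    Matrix (Fin m) (Fin m) ℝ →ₗ[ℝ] (Sym (Fin (n+1)) 1 → ℝ) :=
  LinearMap.pi fun s =>
    Matrix.traceLinearMap (Fin m) ℝ ℝ ∘ₗ LinearMap.mulLeft ℝ (A (Sym.oneEquiv.symm s))

/-- The coefficient vector of the `j`-th entry of `L u` for a constant vector `u`. -/
def rowVec {n m : ℕ} (A : Fin (n+1) → Matrix (Fin m) (Fin m) ℝ) (j : Fin m) :
    (Fin m → ℝ) →ₗ[ℝ] (Sym (Fin (n+1)) 1 → ℝ) :=
  LinearMap.pi fun s => LinearMap.proj j ∘ₗ (A (Sym.oneEquiv.symm s)).mulVecLin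

lemma monVec_one_oneEquiv_zero (n : ℕ) : monVec n 1 (Sym.oneEquiv 0) = 1 := by
  simp [monVec]

lemma monVec_one_oneEquiv_succ {n : ℕ} (j : Fin n) :
    monVec n 1 (Sym.oneEquiv j.succ) = X j := by
  simp [monVec]

lemma linPoly_eq {n : ℕ} (v : Sym (Fin (n+1)) 1 → ℝ) :
    linPoly n v = C (v (Sym.oneEquiv 0)) + ∑ j : Fin n, X j * C (v (Sym.oneEquiv j.succ)) := by
  rw [linPoly, Fintype.linearCombination_apply, ← Equiv.sum_comp Sym.oneEquiv, Fin.sum_univ_succ]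
  simp only [monVec_one_oneEquiv_zero, monVec_one_oneEquiv_succ, smul_eq_C_mul, mul_one,
    mul_comm (X _)]

lemma linPoly_constVec (n : ℕ) : linPoly n (constVec n) = 1 := by
  rw [linPoly, constVec, Fintype.linearCombination_apply_single, monVec_one_oneEquiv_zero,
    one_smul]

lemma totalDegree_linPoly_le {n : ℕ} (v : Sym (Fin (n+1)) 1 → ℝ) :
    (linPoly n v).totalDegree ≤ 1 := by
  rw [linPoly_eq]
  refine (totalDegree_add _ _).trans (max_le (by simp) ?_)
  refine totalDegree_finsetSum_le fun j _ => (totalDegree_mul _ _).trans ?_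
  simp

lemma mem_range_linPoly {n : ℕ} {f : MvPolynomial (Fin n) ℝ} (hf : f.totalDegree ≤ 1) :
    f ∈ LinearMap.range (linPoly n) := by
  rw [f.as_sum]
  refine Submodule.sum_mem _ fun d hd => ?_
  have hd' : d.degree ≤ 1 := (le_totalDegree hd).trans hf
  rcases Nat.le_one_iff_eq_zero_or_eq_one.1 hd' with h | h
  · rw [Finsupp.degree_eq_zero_iff] at h
    subst h
    refine ⟨coeff 0 f • constVec n, ?_⟩
    rw [map_smul, linPoly_constVec, smul_eq_C_mul, mul_one]
    rfl
  · have : d ∈ {d : Fin n →₀ ℕ | d.degree = 1} := h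
    rw [← Finsupp.range_single_one] at this
    obtain ⟨j, rfl⟩ := this
    refine ⟨coeff (Finsupp.single j 1) f • Pi.single (Sym.oneEquiv j.succ) 1, ?_⟩
    rw [map_smul, linPoly, Fintype.linearCombination_apply_single, monVec_one_oneEquiv_succ,
      one_smul, smul_eq_C_mul, C_mul_X_eq_monomial]

lemma linPoly_rowVec {n m : ℕ} (A : Fin (n+1) → Matrix (Fin m) (Fin m) ℝ) (j : Fin m)
    (u : Fin m → ℝ) :
    linPoly n (rowVec A j u) = ∑ b, pencilPoly A j b * C (u b) := by
  rw [linPoly_eq]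
  simp only [rowVec, pencilPoly, LinearMap.pi_apply, LinearMap.comp_apply, LinearMap.proj_apply,
    Matrix.mulVecLin_apply, Matrix.mulVec, dotProduct, Equiv.symm_apply_apply, map_sum, map_mul,
    Finset.mul_sum, add_mul, Finset.sum_add_distrib, Finset.sum_mul]
  rw [Finset.sum_comm]
  simp only [mul_assoc]

lemma linPoly_traceVec {n m : ℕ} (A : Fin (n+1) → Matrix (Fin m) (Fin m) ℝ)
    (S : Matrix (Fin m) (Fin m) ℝ) :
    linPoly n (traceVec A S) = (pencilPoly A * S.map C).trace := by
  have : traceVec A S = ∑ j, rowVec A j (fun b => S b j) := by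
    ext s
    simp [traceVec, rowVec, Matrix.trace, Matrix.mul_apply, Matrix.mulVec, dotProduct]
  rw [this, map_sum]
  simp only [linPoly_rowVec]
  simp [Matrix.trace, Matrix.mul_apply]

lemma eval_pencilPoly {n m : ℕ} (A : Fin (n+1) → Matrix (Fin m) (Fin m) ℝ) (x : Fin n → ℝ)
    (a b : Fin m) : eval x (pencilPoly A a b) = pencilEval A x a b := by
  simp [pencilPoly, pencilEval, Matrix.sum_apply]

lemma eval_linPoly_traceVec {n m : ℕ} (A : Fin (n+1) → Matrix (Fin m) (Fin m) ℝ)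
    (S : Matrix (Fin m) (Fin m) ℝ) (x : Fin n → ℝ) :
    eval x (linPoly n (traceVec A S)) = (pencilEval A x * S).trace := by
  simp [linPoly_traceVec, Matrix.trace, Matrix.mul_apply, eval_pencilPoly]

lemma eval_linPoly_rowVec {n m : ℕ} (A : Fin (n+1) → Matrix (Fin m) (Fin m) ℝ) (j : Fin m)
    (u : Fin m → ℝ) (x : Fin n → ℝ) :
    eval x (linPoly n (rowVec A j u)) = (pencilEval A x *ᵥ u) j := by
  simp [linPoly_rowVec, Matrix.mulVec, dotProduct, eval_pencilPoly]

/-- A linear functional on coefficient vectors that does not vanish at `1` is a multiple of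
the evaluation at a point. -/
lemma exists_eval_linPoly_eq {n : ℕ} (φ : (Sym (Fin (n+1)) 1 → ℝ) →ₗ[ℝ] ℝ)
    (hφ : φ (constVec n) ≠ 0) :
    ∃ x : Fin n → ℝ, ∀ v, φ v = φ (constVec n) * eval x (linPoly n v) := by
  refine ⟨fun j => φ (Pi.single (Sym.oneEquiv j.succ) 1) / φ (constVec n), fun v => ?_⟩
  have h : φ v = ∑ s, v s * φ (Pi.single s 1) := by
    conv_lhs => rw [pi_eq_sum_univ' v]
    simp
  rw [h, ← Equiv.sum_comp Sym.oneEquiv, Fin.sum_univ_succ, linPoly_eq]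
  simp only [map_add, map_sum, map_mul, eval_C, eval_X, mul_add, Finset.mul_sum]
  congr 1
  · rw [mul_comm]; rfl
  · refine Finset.sum_congr rfl fun j _ => ?_
    field_simp

lemma quadFormPoly_eq_sum {n d : ℕ} (W : Matrix (Sym (Fin (n+1)) d) (Sym (Fin (n+1)) 1) ℝ) :
    quadFormPoly W = ∑ a, monVec n d a * linPoly n (W a) := by
  simp only [quadFormPoly, linPoly, Fintype.linearCombination_apply, Finset.mul_sum,
    smul_eq_C_mul]
  refine Finset.sum_congr rfl fun a _ => Finset.sum_congr rfl fun b _ => by ring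

/-- `W ↦ [X]_dᵀ W [X]₁` as a linear map. -/
noncomputable def quadFormPolyLin (n d : ℕ) :
    Matrix (Sym (Fin (n+1)) d) (Sym (Fin (n+1)) 1) ℝ →ₗ[ℝ] MvPolynomial (Fin n) ℝ where
  toFun W := quadFormPoly W
  map_add' W W' := by
    simp [quadFormPoly, add_mul, Finset.sum_add_distrib]
  map_smul' r W := by
    simp [quadFormPoly, smul_eq_C_mul, Finset.mul_sum, mul_assoc]

lemma quadFormPolyLin_apply {n d : ℕ} (W : Matrix (Sym (Fin (n+1)) d) (Sym (Fin (n+1)) 1) ℝ) :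
    quadFormPolyLin n d W = quadFormPoly W := rfl

lemma quadFormPoly_transpose_mul_self {ι : Type*} [Fintype ι] {n : ℕ}
    (M : Matrix ι (Sym (Fin (n+1)) 1) ℝ) :
    quadFormPoly (Mᵀ * M) = ∑ a, linPoly n (M a) ^ 2 := by
  simp only [quadFormPoly, Matrix.mul_apply, Matrix.transpose_apply, linPoly,
    Fintype.linearCombination_apply, sq, smul_eq_C_mul, map_sum, map_mul]
  simp only [Finset.sum_mul_sum]
  simp only [Finset.sum_mul]
  rw [Finset.sum_comm (s := (Finset.univ : Finset ι))]
  refine Finset.sum_congr rfl fun s _ => ?_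
  rw [Finset.sum_comm]
  refine Finset.sum_congr rfl fun a _ => Finset.sum_congr rfl fun t _ => by ring

/-- The polynomials `[X]₂ᵀ W [X]₁` where all rows of `W` lie in `V`. -/
noncomputable def cubicPart {n : ℕ} (V : Submodule ℝ (Sym (Fin (n+1)) 1 → ℝ)) :
    Submodule ℝ (MvPolynomial (Fin n) ℝ) :=
  (Submodule.pi Set.univ fun _ => V).map (quadFormPolyLin n 2)

lemma mem_cubicPart {n : ℕ} {V : Submodule ℝ (Sym (Fin (n+1)) 1 → ℝ)}
    {p : MvPolynomial (Fin n) ℝ} :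
    p ∈ cubicPart V ↔ ∃ W : Matrix (Sym (Fin (n+1)) 2) (Sym (Fin (n+1)) 1) ℝ,
      (∀ a, W a ∈ V) ∧ quadFormPoly W = p := by
  constructor
  · rintro ⟨W, hW, rfl⟩
    exact ⟨W, fun a => hW a trivial, rfl⟩
  · rintro ⟨W, hW, rfl⟩
    exact ⟨W, fun a _ => hW a, rfl⟩

lemma monVec_two_mul_linPoly_mem_cubicPart {n : ℕ} {V : Submodule ℝ (Sym (Fin (n+1)) 1 → ℝ)}
    (a : Sym (Fin (n+1)) 2) {v : Sym (Fin (n+1)) 1 → ℝ} (hv : v ∈ V) :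
    monVec n 2 a * linPoly n v ∈ cubicPart V := by
  classical
  let W : Matrix (Sym (Fin (n+1)) 2) (Sym (Fin (n+1)) 1) ℝ := fun b => if b = a then v else 0
  have hW : ∀ b, W b = if b = a then v else 0 := fun _ => rfl
  refine mem_cubicPart.2 ⟨W, fun b => ?_, ?_⟩
  · rw [hW]
    split_ifs
    exacts [hv, V.zero_mem]
  · rw [quadFormPoly_eq_sum, Finset.sum_eq_single a] <;> simp +contextual [hW]

lemma monVec_one_mul_monVec_one {n : ℕ} (s t : Sym (Fin (n+1)) 1) :
    ∃ a, monVec n 1 s * monVec n 1 t = monVec n 2 a := by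
  refine ⟨s.append t, ?_⟩
  simp [monVec]

lemma linPoly_mul_linPoly_mul_linPoly_mem_cubicPart {n : ℕ}
    {V : Submodule ℝ (Sym (Fin (n+1)) 1 → ℝ)} (p q : Sym (Fin (n+1)) 1 → ℝ)
    {v : Sym (Fin (n+1)) 1 → ℝ} (hv : v ∈ V) :
    linPoly n p * linPoly n q * linPoly n v ∈ cubicPart V := by
  have : linPoly n p * linPoly n q * linPoly n v = ∑ s, ∑ t, (p s * q t) •
      (monVec n 1 s * monVec n 1 t * linPoly n v) := by
    rw [linPoly, Fintype.linearCombination_apply, Fintype.linearCombination_apply,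
      Finset.sum_mul_sum, Finset.sum_mul]
    refine Finset.sum_congr rfl fun s _ => ?_
    rw [Finset.sum_mul]
    refine Finset.sum_congr rfl fun t _ => ?_
    rw [smul_mul_smul_comm, smul_mul_assoc]
  rw [this]
  refine Submodule.sum_mem _ fun s _ => Submodule.sum_mem _ fun t _ => Submodule.smul_mem _ _ ?_
  obtain ⟨a, ha⟩ := monVec_one_mul_monVec_one s t
  rw [ha]
  exact monVec_two_mul_linPoly_mem_cubicPart a hv

lemma linPoly_mul_linPoly_mem_cubicPart {n : ℕ}
    {V : Submodule ℝ (Sym (Fin (n+1)) 1 → ℝ)} (p : Sym (Fin (n+1)) 1 → ℝ)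
    {v : Sym (Fin (n+1)) 1 → ℝ} (hv : v ∈ V) :
    linPoly n p * linPoly n v ∈ cubicPart V := by
  simpa [linPoly_constVec] using
    linPoly_mul_linPoly_mul_linPoly_mem_cubicPart p (constVec n) hv

lemma linPoly_mem_cubicPart {n : ℕ} {V : Submodule ℝ (Sym (Fin (n+1)) 1 → ℝ)}
    {v : Sym (Fin (n+1)) 1 → ℝ} (hv : v ∈ V) : linPoly n v ∈ cubicPart V := by
  simpa [linPoly_constVec] using linPoly_mul_linPoly_mem_cubicPart (constVec n) hv

lemma trace_mul_transpose_mul_self {n m s : ℕ} (A : Fin (n+1) → Matrix (Fin m) (Fin m) ℝ)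
    (P : Matrix (Fin s) (Fin m) (MvPolynomial (Fin n) ℝ)) :
    (pencilPoly A * (Pᵀ * P)).trace = ∑ i, vLv A (P i) := by
  rw [← Matrix.mul_assoc, Matrix.trace_mul_comm, ← Matrix.mul_assoc]
  simp only [Matrix.trace, Matrix.diag_apply, Matrix.mul_apply, Matrix.transpose_apply, vLv,
    Finset.sum_mul]
  refine Finset.sum_congr rfl fun i _ => ?_
  rw [Finset.sum_comm]

/-- The certificates of length `k` with a prescribed last matrix. -/
def HasChain {n m : ℕ} (A : Fin (n+1) → Matrix (Fin m) (Fin m) ℝ) (k : ℕ)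
    (W' : Matrix (Sym (Fin (n+1)) 2) (Sym (Fin (n+1)) 1) ℝ) : Prop :=
  ∃ (S : Fin k → Matrix (Fin m) (Fin m) (MvPolynomial (Fin n) ℝ))
    (U : Fin k → Matrix (Sym (Fin (n+1)) 1) (Sym (Fin (n+1)) 1) ℝ)
    (W : Fin (k+1) → Matrix (Sym (Fin (n+1)) 2) (Sym (Fin (n+1)) 1) ℝ),
    W 0 = 0 ∧ W (Fin.last k) = W' ∧
    (∀ i, IsSosMatrix (S i)) ∧ (∀ i a b, (S i a b).totalDegree ≤ 2) ∧
    (∀ i, (U i).IsSymm) ∧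
    (∀ i : Fin k,
      quadFormPoly (U i) + quadFormPoly (W i.castSucc) + (pencilPoly A * S i).trace = 0) ∧
    (∀ i : Fin k, (U i - (W i.succ)ᵀ * W i.succ).PosSemidef)

lemma hasChain_zero {n m : ℕ} (A : Fin (n+1) → Matrix (Fin m) (Fin m) ℝ) : HasChain A 0 0 :=
  ⟨Fin.elim0, Fin.elim0, fun _ => 0, rfl, rfl, fun i => i.elim0, fun i => i.elim0,
    fun i => i.elim0, fun i => i.elim0, fun i => i.elim0⟩

lemma HasChain.succ {n m k : ℕ} {A : Fin (n+1) → Matrix (Fin m) (Fin m) ℝ}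
    {W W' : Matrix (Sym (Fin (n+1)) 2) (Sym (Fin (n+1)) 1) ℝ} (h : HasChain A k W)
    (S : Matrix (Fin m) (Fin m) (MvPolynomial (Fin n) ℝ))
    (U : Matrix (Sym (Fin (n+1)) 1) (Sym (Fin (n+1)) 1) ℝ)
    (hS : IsSosMatrix S) (hdeg : ∀ a b, (S a b).totalDegree ≤ 2) (hU : U.IsSymm)
    (heq : quadFormPoly U + quadFormPoly W + (pencilPoly A * S).trace = 0)
    (hpsd : (U - W'ᵀ * W').PosSemidef) : HasChain A (k+1) W' := by
  obtain ⟨S₁, U₁, W₁, h0, hl, hS₁, hdeg₁, hU₁, heq₁, hpsd₁⟩ := h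
  refine ⟨Fin.snoc (α := fun _ => _) S₁ S, Fin.snoc (α := fun _ => _) U₁ U,
    Fin.snoc (α := fun _ => _) W₁ W', ?_, ?_, ?_, ?_, ?_, ?_, ?_⟩
  · rw [← Fin.castSucc_zero, Fin.snoc_castSucc, h0]
  · rw [Fin.snoc_last]
  · exact Fin.lastCases (by simpa using hS) (by simpa using hS₁)
  · exact Fin.lastCases (by simpa using hdeg) (by simpa using hdeg₁)
  · exact Fin.lastCases (by simpa using hU) (by simpa using hU₁)
  · refine Fin.lastCases ?_ fun i => ?_
    · simpa only [Fin.snoc_last, Fin.snoc_castSucc, hl] using heq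
    · simpa only [Fin.snoc_castSucc] using heq₁ i
  · refine Fin.lastCases ?_ fun i => ?_
    · simpa only [Fin.snoc_last, Fin.succ_last] using hpsd
    · simpa only [Fin.snoc_castSucc, Fin.succ_castSucc] using hpsd₁ i

/-- Every matrix with rows in `V` is the last matrix of a certificate of length `k`. -/
def IsReachable {n m : ℕ} (A : Fin (n+1) → Matrix (Fin m) (Fin m) ℝ) (k : ℕ)
    (V : Submodule ℝ (Sym (Fin (n+1)) 1 → ℝ)) : Prop :=
  ∀ W : Matrix (Sym (Fin (n+1)) 2) (Sym (Fin (n+1)) 1) ℝ, (∀ a, W a ∈ V) → HasChain A k W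

lemma isReachable_bot {n m : ℕ} (A : Fin (n+1) → Matrix (Fin m) (Fin m) ℝ) :
    IsReachable A 0 ⊥ := by
  intro W hW
  obtain rfl : W = 0 := funext fun a => (Submodule.mem_bot ℝ).1 (hW a)
  exact hasChain_zero A

lemma two_smul_gram_add_gram_sub_gram_add {ι κ : Type*} [Fintype ι] (M N : Matrix ι κ ℝ) :
    (2 : ℝ) • (Mᵀ * M + Nᵀ * N) - (M + N)ᵀ * (M + N) = (M - N)ᵀ * (M - N) := by
  simp only [two_smul, Matrix.transpose_add, Matrix.transpose_sub, Matrix.add_mul,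
    Matrix.mul_add, Matrix.sub_mul, Matrix.mul_sub]
  abel

lemma IsReachable.sup_span_singleton {n m k s : ℕ}
    {A : Fin (n+1) → Matrix (Fin m) (Fin m) ℝ}
    {V : Submodule ℝ (Sym (Fin (n+1)) 1 → ℝ)} (hV : IsReachable A k V)
    {ℓ : Sym (Fin (n+1)) 1 → ℝ} {P : Matrix (Fin s) (Fin m) (MvPolynomial (Fin n) ℝ)}
    (hP : ∀ i b, (P i b).totalDegree ≤ 1)
    (h : linPoly n ℓ ^ 2 + ∑ i, vLv A (P i) ∈ cubicPart V) :
    IsReachable A (k+1) (V ⊔ Submodule.span ℝ {ℓ}) := by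
  intro W' hW'
  have hdec : ∀ a, ∃ v ∈ V, ∃ t : ℝ, v + t • ℓ = W' a := fun a => by
    obtain ⟨v, hv, w, hw, hvw⟩ := Submodule.mem_sup.1 (hW' a)
    obtain ⟨t, rfl⟩ := Submodule.mem_span_singleton.1 hw
    exact ⟨v, hv, t, hvw⟩
  choose v hv t ht using hdec
  let M : Matrix (Sym (Fin (n+1)) 2) (Sym (Fin (n+1)) 1) ℝ := Matrix.of v
  let N : Matrix (Sym (Fin (n+1)) 2) (Sym (Fin (n+1)) 1) ℝ := Matrix.of fun a => t a • ℓ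
  have hMN : W' = M + N := funext fun a => (ht a).symm
  have hM : quadFormPoly (Mᵀ * M) ∈ cubicPart V := by
    rw [quadFormPoly_transpose_mul_self]
    refine Submodule.sum_mem _ fun a _ => ?_
    rw [sq]
    exact linPoly_mul_linPoly_mem_cubicPart _ (hv a)
  have hN : quadFormPoly (Nᵀ * N) = (∑ a, t a ^ 2) • linPoly n ℓ ^ 2 := by
    rw [quadFormPoly_transpose_mul_self, Finset.sum_smul]
    refine Finset.sum_congr rfl fun a _ => ?_
    have : N a = t a • ℓ := rfl
    rw [this, map_smul, smul_pow]
  set τ : ℝ := 2 * ∑ a, t a ^ 2 with hτ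
  have hτ0 : 0 ≤ τ := by positivity
  let Q : Matrix (Fin s) (Fin m) (MvPolynomial (Fin n) ℝ) :=
    (C (Real.sqrt τ) : MvPolynomial (Fin n) ℝ) • P
  have hQ : Qᵀ * Q = (C τ : MvPolynomial (Fin n) ℝ) • (Pᵀ * P) := by
    simp only [Q, Matrix.transpose_smul, Matrix.smul_mul, Matrix.mul_smul, smul_smul, ← C_mul,
      Real.mul_self_sqrt hτ0]
  have hU : quadFormPoly ((2 : ℝ) • (Mᵀ * M + Nᵀ * N)) =
      (2 : ℝ) • quadFormPoly (Mᵀ * M) + τ • linPoly n ℓ ^ 2 := by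
    rw [← quadFormPolyLin_apply, map_smul, map_add, quadFormPolyLin_apply, quadFormPolyLin_apply,
      hN, smul_add, smul_smul]
  have htr : (pencilPoly A * (Qᵀ * Q)).trace = τ • ∑ i, vLv A (P i) := by
    rw [hQ, Matrix.mul_smul, Matrix.trace_smul, trace_mul_transpose_mul_self, smul_eq_mul,
      smul_eq_C_mul]
  have hmem : quadFormPoly ((2 : ℝ) • (Mᵀ * M + Nᵀ * N)) + (pencilPoly A * (Qᵀ * Q)).trace
      ∈ cubicPart V := by
    rw [hU, htr, add_assoc, ← smul_add]
    exact add_mem (Submodule.smul_mem _ _ hM) (Submodule.smul_mem _ _ h)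
  obtain ⟨W, hW, hWeq⟩ := mem_cubicPart.1 (neg_mem hmem)
  refine (hV W hW).succ (Qᵀ * Q) ((2 : ℝ) • (Mᵀ * M + Nᵀ * N)) ⟨s, Q, rfl⟩ (fun a b => ?_)
    ?_ ?_ ?_
  · rw [Matrix.mul_apply]
    refine totalDegree_finsetSum_le fun i _ => (totalDegree_mul _ _).trans ?_
    have hdeg : ∀ c, (Q i c).totalDegree ≤ 1 := fun c => by
      refine (totalDegree_mul _ _).trans ?_
      simpa using hP i c
    exact add_le_add (hdeg a) (hdeg b)
  · simp only [Matrix.IsSymm, Matrix.transpose_smul, Matrix.transpose_add, Matrix.transpose_mul,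
      Matrix.transpose_transpose]
  · rw [hWeq]
    abel
  · have : (2 : ℝ) • (Mᵀ * M + Nᵀ * N) - W'ᵀ * W' = (M - N)ᴴ * (M - N) := by
      rw [hMN, Matrix.conjTranspose_eq_transpose_of_trivial]
      exact two_smul_gram_add_gram_sub_gram_add M N
    rw [this]
    exact Matrix.posSemidef_conjTranspose_mul_self _

lemma IsReachable.mono_length {n m k : ℕ} {A : Fin (n+1) → Matrix (Fin m) (Fin m) ℝ}
    {V : Submodule ℝ (Sym (Fin (n+1)) 1 → ℝ)} (hV : IsReachable A k V) :
    IsReachable A (k+1) V := by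
  have h : linPoly n 0 ^ 2 +
      ∑ i, vLv A ((0 : Matrix (Fin 0) (Fin m) (MvPolynomial (Fin n) ℝ)) i) ∈ cubicPart V := by
    simp
  simpa using hV.sup_span_singleton (fun i => i.elim0) h

lemma eval_nonneg_of_certificate {n m : ℕ} {A : Fin (n+1) → Matrix (Fin m) (Fin m) ℝ}
    {f : MvPolynomial (Fin n) ℝ}
    {W : Matrix (Sym (Fin (n+1)) 2) (Sym (Fin (n+1)) 1) ℝ}
    (hW : HasChain A n W) {S₀ : Matrix (Fin m) (Fin m) ℝ} {c : ℝ}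
    (hS₀ : S₀.PosSemidef) (hc : 0 ≤ c)
    (hfin : f - C c + quadFormPoly W - (pencilPoly A * S₀.map C).trace = 0)
    {x : Fin n → ℝ} (hx : x ∈ specSet A) : 0 ≤ eval x f := by
  obtain ⟨S, U, W, h0, rfl, hS, -, -, heq, hpsd⟩ := hW
  have hLx : (pencilEval A x).PosSemidef := hx
  have hquad : ∀ (d : ℕ) (M : Matrix (Sym (Fin (n+1)) d) (Sym (Fin (n+1)) 1) ℝ),
      eval x (quadFormPoly M) =
        (fun a => eval x (monVec n d a)) ⬝ᵥ (M *ᵥ fun a => eval x (monVec n 1 a)) := by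
    intro d M
    simp only [quadFormPoly, map_sum, map_mul, eval_C, dotProduct, Matrix.mulVec, Finset.mul_sum]
    exact Finset.sum_congr rfl fun a _ => Finset.sum_congr rfl fun b _ => by ring
  set v : Sym (Fin (n+1)) 1 → ℝ := fun a => eval x (monVec n 1 a)
  have hker : ∀ i, W i *ᵥ v = 0 := by
    intro i
    induction i using Fin.induction with
    | zero => simp [h0]
    | succ i ih =>
      have h1 := congrArg (eval x) (heq i)
      rw [map_add, map_add, hquad, hquad, ih, dotProduct_zero, add_zero, map_zero] at h1
      obtain ⟨s, P, hP⟩ := hS i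
      have h2 : 0 ≤ eval x (pencilPoly A * S i).trace := by
        rw [hP, trace_mul_transpose_mul_self, map_sum]
        refine Finset.sum_nonneg fun j _ => ?_
        have h3 := hLx.dotProduct_mulVec_nonneg fun a => eval x (P j a)
        simp only [vLv, map_sum, map_mul, eval_pencilPoly]
        simpa [dotProduct, Matrix.mulVec, Finset.mul_sum, mul_assoc] using h3
      have h4 := (hpsd i).dotProduct_mulVec_nonneg v
      rw [Matrix.sub_mulVec, dotProduct_sub, ← Matrix.mulVec_mulVec, Matrix.mulVec_transpose,
        star_trivial, dotProduct_comm v (_ ᵥ* _), ← Matrix.dotProduct_mulVec] at h4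
      have h5 : (W i.succ *ᵥ v) ⬝ᵥ (W i.succ *ᵥ v) ≤ 0 := by linarith
      refine dotProduct_self_eq_zero.1 (le_antisymm h5 ?_)
      exact Finset.sum_nonneg fun _ _ => mul_self_nonneg _
  have h1 := congrArg (eval x) hfin
  rw [map_sub, map_add, map_sub, hquad, hker, dotProduct_zero, eval_C,
    ← linPoly_traceVec, eval_linPoly_traceVec, map_zero] at h1
  obtain ⟨r, u, hu⟩ := Matrix.posSemidef_iff_eq_sum_vecMulVec.1 hS₀
  have h2 : 0 ≤ (pencilEval A x * S₀).trace := by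
    rw [hu, Matrix.mul_sum, Matrix.trace_sum]
    refine Finset.sum_nonneg fun i _ => ?_
    rw [Matrix.mul_vecMulVec, Matrix.trace_vecMulVec, dotProduct_comm]
    exact hLx.dotProduct_mulVec_nonneg _
  linarith

lemma exists_posFunctional_of_disjoint {E : Type*} [AddCommGroup E] [Module ℝ E]
    [TopologicalSpace E] [IsTopologicalAddGroup E] [ContinuousSMul ℝ E] [LocallyConvexSpace ℝ E]
    {K : Set E} {V : Submodule ℝ E} (hconv : Convex ℝ K) (hcomp : IsCompact K)
    (hV : IsClosed (V : Set E)) (hdisj : Disjoint K V) :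
    ∃ φ : E →ₗ[ℝ] ℝ, (∀ v ∈ V, φ v = 0) ∧ ∀ x ∈ K, 0 < φ x := by
  obtain ⟨φ, a, b, ha, hab, hb⟩ :=
    geometric_hahn_banach_compact_closed hconv hcomp V.convex hV hdisj
  have hb0 : b < 0 := by simpa using hb 0 V.zero_mem
  refine ⟨-φ.toLinearMap, fun v hv => ?_, fun x hx => ?_⟩
  · by_contra hne
    have hne' : φ v ≠ 0 := by simpa using hne
    have h := hb ((b / φ v) • v) (V.smul_mem _ hv)
    rw [map_smul, smul_eq_mul, div_mul_cancel₀ _ hne'] at h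
    exact lt_irrefl _ h
  · have := ha x hx
    simp only [LinearMap.neg_apply, ContinuousLinearMap.coe_coe]
    linarith

lemma Matrix.isClosed_setOf_posSemidef (m : ℕ) :
    IsClosed {M : Matrix (Fin m) (Fin m) ℝ | M.PosSemidef} := by
  simp only [Matrix.posSemidef_iff_dotProduct_mulVec, Set.ofPred_and, Set.ofPred_forall]
  refine IsClosed.inter ?_ (isClosed_iInter fun x => ?_)
  · exact isClosed_eq continuous_id.matrix_conjTranspose continuous_id
  · exact isClosed_le continuous_const
      (continuous_const.dotProduct (continuous_id.matrix_mulVec continuous_const))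

lemma Matrix.PosSemidef.abs_apply_le_trace {m : ℕ} {M : Matrix (Fin m) (Fin m) ℝ}
    (hM : M.PosSemidef) (a b : Fin m) : |M a b| ≤ M.trace := by
  have hdiag : ∀ c, M c c ≤ M.trace := fun c =>
    Finset.single_le_sum (f := fun c => M c c) (fun c _ => hM.diag_nonneg) (Finset.mem_univ c)
  have hsymm : M b a = M a b := by simpa using hM.isHermitian.apply a b
  have hp := hM.dotProduct_mulVec_nonneg (Pi.single a 1 + Pi.single b 1)
  have hn := hM.dotProduct_mulVec_nonneg (Pi.single a 1 - Pi.single b 1)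
  simp only [star_trivial, Matrix.mulVec_add, Matrix.mulVec_sub, dotProduct_add, dotProduct_sub,
    add_dotProduct, sub_dotProduct, Matrix.mulVec_single_one, single_one_dotProduct,
    Matrix.col_apply] at hp hn
  have ha := hdiag a
  have hb := hdiag b
  rw [abs_le]
  constructor <;> linarith

/-- Normalized triples `(t, c, S)` of nonnegative scalars and a positive semidefinite matrix
with range in `K`. -/
def weightSet {m : ℕ} (K : Submodule ℝ (Fin m → ℝ)) :
    Set (ℝ × ℝ × Matrix (Fin m) (Fin m) ℝ) :=
  {p | 0 ≤ p.1 ∧ 0 ≤ p.2.1 ∧ p.2.2.PosSemidef ∧ (∀ w, p.2.2 *ᵥ w ∈ K) ∧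
    p.1 + p.2.1 + p.2.2.trace = 1}

lemma convex_weightSet {m : ℕ} (K : Submodule ℝ (Fin m → ℝ)) : Convex ℝ (weightSet K) := by
  rintro ⟨t, c, S⟩ ⟨ht, hc, hS, hK, h1⟩ ⟨t', c', S'⟩ ⟨ht', hc', hS', hK', h1'⟩ a b ha hb hab
  dsimp only at *
  refine ⟨?_, ?_, (hS.smul ha).add (hS'.smul hb), fun w => ?_, ?_⟩
  · simp only [Prod.smul_mk, Prod.mk_add_mk, smul_eq_mul]
    positivity
  · simp only [Prod.smul_mk, Prod.mk_add_mk, smul_eq_mul]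
    positivity
  · simp only [Prod.smul_mk, Prod.mk_add_mk, Matrix.add_mulVec, Matrix.smul_mulVec]
    exact K.add_mem (K.smul_mem _ (hK w)) (K.smul_mem _ (hK' w))
  · simp only [Prod.smul_mk, Prod.mk_add_mk, smul_eq_mul, Matrix.trace_add, Matrix.trace_smul]
    linear_combination a * h1 + b * h1' + hab

lemma isCompact_weightSet {m : ℕ} (K : Submodule ℝ (Fin m → ℝ)) : IsCompact (weightSet K) := by
  have hbox : IsCompact (Set.Icc (0:ℝ) 1 ×ˢ Set.Icc (0:ℝ) 1 ×ˢ
      (Set.univ.pi fun _ => Set.univ.pi fun _ => Set.Icc (-1:ℝ) 1 :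
        Set (Matrix (Fin m) (Fin m) ℝ))) :=
    isCompact_Icc.prod (isCompact_Icc.prod
      (isCompact_univ_pi fun _ => isCompact_univ_pi fun _ => isCompact_Icc))
  refine hbox.of_isClosed_subset ?_ ?_
  · simp only [weightSet, Set.ofPred_and, Set.ofPred_forall]
    refine (isClosed_le continuous_const continuous_fst).inter
      ((isClosed_le continuous_const (by fun_prop)).inter (IsClosed.inter ?_ (IsClosed.inter
        (isClosed_iInter fun w => ?_) (isClosed_eq ?_ continuous_const))))
    · exact (Matrix.isClosed_setOf_posSemidef m).preimage (by fun_prop)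
    · exact K.closed_of_finiteDimensional.preimage
        (continuous_snd.snd.matrix_mulVec continuous_const)
    · exact (continuous_fst.add continuous_snd.fst).add continuous_snd.snd.matrix_trace
  · rintro ⟨t, c, S⟩ ⟨ht, hc, hS, -, h1⟩
    dsimp only at *
    have htr := hS.trace_nonneg
    refine ⟨⟨ht, by linarith⟩, ⟨hc, by linarith⟩, fun a _ b _ => abs_le.1 ?_⟩
    exact (hS.abs_apply_le_trace a b).trans (by linarith)

lemma pencilEval_isSymm {n m : ℕ} {A : Fin (n+1) → Matrix (Fin m) (Fin m) ℝ}
    (hsymm : ∀ i, (A i).IsSymm) (x : Fin n → ℝ) : (pencilEval A x).IsSymm := by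
  simp only [Matrix.IsSymm, pencilEval, Matrix.transpose_add, Matrix.transpose_sum,
    Matrix.transpose_smul, (hsymm _).eq]

lemma pencilPoly_isSymm {n m : ℕ} {A : Fin (n+1) → Matrix (Fin m) (Fin m) ℝ}
    (hsymm : ∀ i, (A i).IsSymm) : (pencilPoly A).IsSymm := by
  refine Matrix.IsSymm.ext fun a b => ?_
  simp only [pencilPoly, (hsymm _).apply a b]

lemma vLv_eq_dotProduct {n m : ℕ} (A : Fin (n+1) → Matrix (Fin m) (Fin m) ℝ)
    (v : Fin m → MvPolynomial (Fin n) ℝ) : vLv A v = v ⬝ᵥ (pencilPoly A *ᵥ v) := by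
  simp only [vLv, dotProduct, Matrix.mulVec, Finset.mul_sum, mul_assoc]

lemma vLv_smul_add_single {n m : ℕ} {A : Fin (n+1) → Matrix (Fin m) (Fin m) ℝ}
    (hsymm : ∀ i, (A i).IsSymm) (p l : MvPolynomial (Fin n) ℝ)
    (v : Fin m → MvPolynomial (Fin n) ℝ) (j : Fin m) :
    vLv A (p • v + Pi.single j l) =
      p ^ 2 * vLv A v + (2 * p * l * (pencilPoly A *ᵥ v) j + l ^ 2 * pencilPoly A j j) := by
  have h : v ⬝ᵥ (pencilPoly A *ᵥ Pi.single j l) = l * (pencilPoly A *ᵥ v) j := by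
    rw [Matrix.dotProduct_mulVec, dotProduct_single, ← Matrix.mulVec_transpose,
      (pencilPoly_isSymm hsymm).eq, mul_comm]
  have h' : Pi.single j l ⬝ᵥ (pencilPoly A *ᵥ Pi.single j l) = l ^ 2 * pencilPoly A j j := by
    rw [single_dotProduct, Matrix.mulVec, dotProduct_single]
    ring
  simp only [vLv_eq_dotProduct, Matrix.mulVec_add, Matrix.mulVec_smul, add_dotProduct,
    dotProduct_add, smul_dotProduct, dotProduct_smul, smul_eq_mul, h, h']
  rw [single_dotProduct]
  ring

lemma linPoly_traceVec_vecMulVec {n m : ℕ} (A : Fin (n+1) → Matrix (Fin m) (Fin m) ℝ)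
    (u : Fin m → ℝ) :
    linPoly n (traceVec A (Matrix.vecMulVec u u)) = vLv A (fun b => C (u b)) := by
  simp only [linPoly_traceVec, Matrix.trace, Matrix.diag_apply, Matrix.mul_apply,
    Matrix.map_apply, Matrix.vecMulVec_apply, vLv, map_mul]
  exact Finset.sum_congr rfl fun a _ => Finset.sum_congr rfl fun b _ => by ring

lemma exists_sq_add_sum_vLv_mem_cubicPart {n m r : ℕ}
    {A : Fin (n+1) → Matrix (Fin m) (Fin m) ℝ} (hsymm : ∀ i, (A i).IsSymm)
    {V : Submodule ℝ (Sym (Fin (n+1)) 1 → ℝ)} (u : Fin r → Fin m → ℝ)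
    (hu : traceVec A (∑ i, Matrix.vecMulVec (u i) (u i)) ∈ V) (k : Fin r) (j : Fin m) :
    ∃ P : Matrix (Fin r) (Fin m) (MvPolynomial (Fin n) ℝ), (∀ i b, (P i b).totalDegree ≤ 1) ∧
      linPoly n (rowVec A j (u k)) ^ 2 + ∑ i, vLv A (P i) ∈ cubicPart V := by
  set l := linPoly n (rowVec A j (u k)) with hl
  set p₀ : Sym (Fin (n+1)) 1 → ℝ := (-1/2 : ℝ) • (constVec n + rowVec A j (Pi.single j 1))
  set p := linPoly n p₀ with hp
  have hpj : p = C (-1/2 : ℝ) * (1 + pencilPoly A j j) := by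
    have : linPoly n (rowVec A j (Pi.single j 1)) = pencilPoly A j j := by
      rw [linPoly_rowVec, Finset.sum_eq_single j] <;> simp +contextual
    rw [hp, map_smul, map_add, linPoly_constVec, this, smul_eq_C_mul]
  have hlk : (pencilPoly A *ᵥ fun b => C (u k b)) j = l := by
    rw [hl, linPoly_rowVec]
    rfl
  let P : Matrix (Fin r) (Fin m) (MvPolynomial (Fin n) ℝ) :=
    fun i => p • (fun b => C (u i b)) + Pi.single j (if i = k then l else 0)
  have hP : ∀ i, vLv A (P i) =
      p ^ 2 * vLv A (fun b => C (u i b)) + if i = k then -l ^ 2 else 0 := by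
    intro i
    have : P i = p • (fun b => C (u i b)) + Pi.single j (if i = k then l else 0) := rfl
    rw [this, vLv_smul_add_single hsymm]
    split_ifs with hik
    · have h2 : (2 : MvPolynomial (Fin n) ℝ) * C (-1/2) = -1 := by
        rw [← map_ofNat C 2, ← C_mul]
        norm_num
      rw [hik, hlk, hpj]
      linear_combination (l ^ 2 * (1 + pencilPoly A j j)) * h2
    · ring
  refine ⟨P, fun i b => ?_, ?_⟩
  · refine (totalDegree_add _ _).trans (max_le ?_ ?_)
    · refine (totalDegree_mul _ _).trans ?_
      simpa using totalDegree_linPoly_le p₀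
    · by_cases hb : b = j
      · subst hb
        rw [Pi.single_eq_same]
        split_ifs
        · exact totalDegree_linPoly_le _
        · simp
      · simp [Pi.single_eq_of_ne hb]
  · have : l ^ 2 + ∑ i, vLv A (P i) =
        p * p * linPoly n (traceVec A (∑ i, Matrix.vecMulVec (u i) (u i))) := by
      simp only [hP, Finset.sum_add_distrib, Finset.sum_ite_eq', Finset.mem_univ, if_true,
        map_sum, linPoly_traceVec_vecMulVec, Finset.mul_sum]
      ring_nf
    rw [this]
    exact linPoly_mul_linPoly_mul_linPoly_mem_cubicPart _ _ hu

/-- `f` agrees with an element of the form `c + tr (L S)` up to a cubic with rows in `V`. -/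
def IsCertified {n m : ℕ} (A : Fin (n+1) → Matrix (Fin m) (Fin m) ℝ)
    (f : MvPolynomial (Fin n) ℝ) (V : Submodule ℝ (Sym (Fin (n+1)) 1 → ℝ)) : Prop :=
  ∃ (S : Matrix (Fin m) (Fin m) ℝ) (c : ℝ), S.PosSemidef ∧ 0 ≤ c ∧
    f - C c - (pencilPoly A * S.map C).trace ∈ cubicPart V

lemma isCertified_of_sub_mem {n m : ℕ} {A : Fin (n+1) → Matrix (Fin m) (Fin m) ℝ}
    {f : Sym (Fin (n+1)) 1 → ℝ} {V : Submodule ℝ (Sym (Fin (n+1)) 1 → ℝ)}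
    {S : Matrix (Fin m) (Fin m) ℝ} {c : ℝ} (hS : S.PosSemidef) (hc : 0 ≤ c)
    (h : f - c • constVec n - traceVec A S ∈ V) : IsCertified A (linPoly n f) V := by
  refine ⟨S, c, hS, hc, ?_⟩
  have := linPoly_mem_cubicPart h
  rwa [map_sub, map_sub, map_smul, linPoly_constVec, linPoly_traceVec, smul_eq_C_mul,
    mul_one] at this

lemma isCertified_of_constVec_mem {n m : ℕ} (A : Fin (n+1) → Matrix (Fin m) (Fin m) ℝ)
    (f : Sym (Fin (n+1)) 1 → ℝ) {V : Submodule ℝ (Sym (Fin (n+1)) 1 → ℝ)}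
    (h : constVec n ∈ V) : IsCertified A (linPoly n f) V := by
  refine ⟨0, 0, Matrix.PosSemidef.zero, le_rfl, ?_⟩
  simpa [linPoly_constVec] using linPoly_mul_linPoly_mem_cubicPart f h

lemma eval_linPoly_traceVec_vecMulVec {n m : ℕ} (A : Fin (n+1) → Matrix (Fin m) (Fin m) ℝ)
    (u : Fin m → ℝ) (x : Fin n → ℝ) :
    eval x (linPoly n (traceVec A (Matrix.vecMulVec u u))) = u ⬝ᵥ (pencilEval A x *ᵥ u) := by
  rw [eval_linPoly_traceVec, Matrix.mul_vecMulVec, Matrix.trace_vecMulVec, dotProduct_comm]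

lemma Matrix.posSemidef_vecMulVec_self {m : ℕ} (u : Fin m → ℝ) :
    (Matrix.vecMulVec u u).PosSemidef := by
  simpa using Matrix.posSemidef_vecMulVec_self_star u

lemma isCertified_or_exists_weight {n m : ℕ} {A : Fin (n+1) → Matrix (Fin m) (Fin m) ℝ}
    (hsymm : ∀ i, (A i).IsSymm) {f : Sym (Fin (n+1)) 1 → ℝ}
    (hf : ∀ x ∈ specSet A, 0 ≤ eval x (linPoly n f))
    (V : Submodule ℝ (Sym (Fin (n+1)) 1 → ℝ)) {K : Submodule ℝ (Fin m → ℝ)}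
    (hK : IsCompl (⨅ j, V.comap (rowVec A j)) K) :
    IsCertified A (linPoly n f) V ∨
      ∃ (c : ℝ) (S : Matrix (Fin m) (Fin m) ℝ), 0 ≤ c ∧ S.PosSemidef ∧ (∀ w, S *ᵥ w ∈ K) ∧
        c + S.trace = 1 ∧ c • constVec n + traceVec A S ∈ V := by
  let Φ : ℝ × ℝ × Matrix (Fin m) (Fin m) ℝ →ₗ[ℝ] (Sym (Fin (n+1)) 1 → ℝ) :=
    (LinearMap.toSpanSingleton ℝ _ (-f)).coprod
      ((LinearMap.toSpanSingleton ℝ _ (constVec n)).coprod (traceVec A))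
  have hΦ : ∀ t c S, Φ (t, c, S) = t • (-f) + (c • constVec n + traceVec A S) :=
    fun _ _ _ => rfl
  by_cases hdisj : Disjoint (Φ '' weightSet K) V
  · exfalso
    obtain ⟨φ, hφV, hφ⟩ := exists_posFunctional_of_disjoint
      ((convex_weightSet K).linear_image Φ)
      ((isCompact_weightSet K).image Φ.continuous_of_finiteDimensional)
      V.closed_of_finiteDimensional hdisj
    have h1 : 0 < φ (constVec n) := by
      have := hφ _ ⟨(0, 1, 0), ⟨le_rfl, zero_le_one, Matrix.PosSemidef.zero, by simp, by simp⟩, rfl⟩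
      simpa [hΦ] using this
    have hfneg : 0 < φ (-f) := by
      have := hφ _ ⟨(1, 0, 0), ⟨zero_le_one, le_rfl, Matrix.PosSemidef.zero, by simp, by simp⟩, rfl⟩
      simpa [hΦ] using this
    obtain ⟨x, hx⟩ := exists_eval_linPoly_eq φ h1.ne'
    have hL := pencilEval_isSymm hsymm x
    have hker : ∀ w ∈ ⨅ j, V.comap (rowVec A j), pencilEval A x *ᵥ w = 0 := by
      intro w hw
      ext j
      have h := hφV _ ((Submodule.mem_iInf _).1 hw j)
      rw [hx, eval_linPoly_rowVec] at h
      exact (mul_eq_zero.1 h).resolve_left h1.ne'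
    have hpos : ∀ w ∈ K, 0 ≤ w ⬝ᵥ (pencilEval A x *ᵥ w) := by
      intro w hw
      rcases eq_or_ne w 0 with rfl | hw0
      · simp
      have hww : 0 < w ⬝ᵥ w :=
        lt_of_le_of_ne (Finset.sum_nonneg fun _ _ => mul_self_nonneg _)
          (Ne.symm fun h => hw0 (dotProduct_self_eq_zero.1 h))
      have h := hφ _ ⟨(0, 0, (w ⬝ᵥ w)⁻¹ • Matrix.vecMulVec w w), ⟨le_rfl, le_rfl,
        (Matrix.posSemidef_vecMulVec_self w).smul (inv_nonneg.2 hww.le), fun z => ?_, ?_⟩, rfl⟩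
      · rw [hΦ, zero_smul, zero_smul, zero_add, zero_add, map_smul, map_smul, hx,
          eval_linPoly_traceVec_vecMulVec] at h
        rw [smul_eq_mul, mul_pos_iff_of_pos_left (inv_pos.2 hww), mul_pos_iff_of_pos_left h1] at h
        exact h.le
      · rw [Matrix.smul_mulVec, Matrix.vecMulVec_mulVec, op_smul_eq_smul]
        exact K.smul_mem _ (K.smul_mem _ hw)
      · simp [Matrix.trace_smul, Matrix.trace_vecMulVec, hww.ne']
    have hmem : x ∈ specSet A := by
      refine Matrix.PosSemidef.of_dotProduct_mulVec_nonneg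
        (by rw [Matrix.IsHermitian, Matrix.conjTranspose_eq_transpose_of_trivial, hL.eq])
        fun w => ?_
      obtain ⟨w₁, hw₁, w₂, hw₂, rfl⟩ :=
        Submodule.mem_sup.1 (hK.sup_eq_top ▸ Submodule.mem_top : w ∈ _ ⊔ K)
      have h0 : w₁ ⬝ᵥ (pencilEval A x *ᵥ w₂) = 0 := by
        rw [Matrix.dotProduct_mulVec, ← Matrix.mulVec_transpose, hL.eq, hker _ hw₁, zero_dotProduct]
      rw [star_trivial, Matrix.mulVec_add, hker _ hw₁, zero_add, add_dotProduct, h0, zero_add]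
      exact hpos _ hw₂
    have h2 := mul_nonneg h1.le (hf x hmem)
    rw [← hx] at h2
    rw [map_neg] at hfneg
    linarith
  · obtain ⟨_, ⟨⟨t, c, S⟩, ⟨ht, hc, hS, hSK, h1⟩, rfl⟩, hV⟩ := Set.not_disjoint_iff.1 hdisj
    dsimp only at ht hc hS hSK h1
    rw [hΦ] at hV
    rcases ht.eq_or_lt with rfl | htpos
    · right
      refine ⟨c, S, hc, hS, hSK, by linarith, ?_⟩
      rwa [zero_smul, zero_add] at hV
    · left
      refine isCertified_of_sub_mem (hS.smul (inv_nonneg.2 ht))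
        (mul_nonneg (inv_nonneg.2 ht) hc) ?_
      have := V.smul_mem (-t⁻¹) hV
      convert this using 1
      rw [map_smul, smul_add, smul_add, smul_smul, smul_neg, smul_smul]
      simp only [neg_mul, inv_mul_cancel₀ htpos.ne']
      module

lemma isCertified_or_exists_notMem {n m : ℕ} {A : Fin (n+1) → Matrix (Fin m) (Fin m) ℝ}
    (hsymm : ∀ i, (A i).IsSymm) {f : Sym (Fin (n+1)) 1 → ℝ}
    (hf : ∀ x ∈ specSet A, 0 ≤ eval x (linPoly n f))
    (V : Submodule ℝ (Sym (Fin (n+1)) 1 → ℝ)) :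
    IsCertified A (linPoly n f) V ∨
      ∃ ℓ ∉ V, ∃ (r : ℕ) (P : Matrix (Fin r) (Fin m) (MvPolynomial (Fin n) ℝ)),
        (∀ i b, (P i b).totalDegree ≤ 1) ∧
          linPoly n ℓ ^ 2 + ∑ i, vLv A (P i) ∈ cubicPart V := by
  by_cases hV1 : constVec n ∈ V
  · exact Or.inl (isCertified_of_constVec_mem A f hV1)
  obtain ⟨K, hK⟩ := Submodule.exists_isCompl (⨅ j, V.comap (rowVec A j))
  refine (isCertified_or_exists_weight hsymm hf V hK).imp_right ?_
  rintro ⟨c, S, hc, hS, hSK, h1, hmem⟩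
  rcases hc.eq_or_lt with rfl | hcpos
  · rw [zero_smul, zero_add] at hmem
    have hS0 : S ≠ 0 := by
      rintro rfl
      simp at h1
    obtain ⟨z, hz⟩ : ∃ z, S *ᵥ z ≠ 0 := by
      by_contra! h
      exact hS0 (Matrix.ext_of_mulVec_single fun i => by rw [h, Matrix.zero_mulVec])
    have hznot : S *ᵥ z ∉ ⨅ j, V.comap (rowVec A j) := fun h =>
      hz (Submodule.disjoint_def.1 hK.disjoint _ h (hSK z))
    obtain ⟨r, u, hu⟩ := Matrix.posSemidef_iff_eq_sum_vecMulVec.1 hS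
    simp only [star_trivial] at hu
    obtain ⟨k, hk⟩ : ∃ k, u k ∉ ⨅ j, V.comap (rowVec A j) := by
      by_contra! h
      refine hznot ?_
      rw [hu, Matrix.sum_mulVec]
      refine Submodule.sum_mem _ fun i _ => ?_
      rw [Matrix.vecMulVec_mulVec, op_smul_eq_smul]
      exact Submodule.smul_mem _ _ (h i)
    rw [Submodule.mem_iInf, not_forall] at hk
    obtain ⟨j, hj⟩ := hk
    exact ⟨_, hj, r, exists_sq_add_sum_vLv_mem_cubicPart hsymm u (hu ▸ hmem) k j⟩
  · obtain ⟨r, u, hu⟩ := Matrix.posSemidef_iff_eq_sum_vecMulVec.1 (hS.smul (inv_nonneg.2 hc))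
    simp only [star_trivial] at hu
    refine ⟨constVec n, hV1, r, fun i b => C (u i b), by simp, ?_⟩
    have h := linPoly_mem_cubicPart (V.smul_mem c⁻¹ hmem)
    rw [smul_add, smul_smul, inv_mul_cancel₀ hcpos.ne', one_smul, ← map_smul, hu, map_add,
      map_sum, map_sum] at h
    simp only [linPoly_traceVec_vecMulVec, linPoly_constVec] at h
    rwa [linPoly_constVec, one_pow]

lemma isCertified_of_le_finrank {n m : ℕ} {A : Fin (n+1) → Matrix (Fin m) (Fin m) ℝ}
    (hsymm : ∀ i, (A i).IsSymm) {f : Sym (Fin (n+1)) 1 → ℝ}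
    (hf : ∀ x ∈ specSet A, 0 ≤ eval x (linPoly n f))
    {V : Submodule ℝ (Sym (Fin (n+1)) 1 → ℝ)} (hV : n ≤ Module.finrank ℝ V) :
    IsCertified A (linPoly n f) V := by
  by_cases hV1 : constVec n ∈ V
  · exact isCertified_of_constVec_mem A f hV1
  obtain ⟨φ, hφ1, hφV⟩ := Submodule.exists_le_ker_of_notMem hV1
  have hker : V = LinearMap.ker φ := by
    refine Submodule.eq_of_le_of_finrank_le hφV ?_
    have hcard : Module.finrank ℝ (Sym (Fin (n+1)) 1 → ℝ) = n + 1 := by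
      rw [Module.finrank_fintype_fun_eq_card, ← Fintype.card_congr Sym.oneEquiv, Fintype.card_fin]
    have hlt : Module.finrank ℝ (LinearMap.ker φ) < n + 1 := by
      refine lt_of_lt_of_eq (Submodule.finrank_lt fun h => hφ1 ?_) hcard
      rw [← LinearMap.mem_ker, h]
      trivial
    omega
  obtain ⟨x, hx⟩ := exists_eval_linPoly_eq φ hφ1
  have hmem : ∀ v, eval x (linPoly n v) = 0 → v ∈ V := fun v hv => by
    rw [hker, LinearMap.mem_ker, hx, hv, mul_zero]
  by_cases hfx : 0 ≤ eval x (linPoly n f)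
  · refine isCertified_of_sub_mem Matrix.PosSemidef.zero hfx (hmem _ ?_)
    simp [linPoly_constVec]
  · obtain ⟨u, hu⟩ : ∃ u, u ⬝ᵥ (pencilEval A x *ᵥ u) < 0 := by
      by_contra! h
      refine hfx (hf x (Matrix.PosSemidef.of_dotProduct_mulVec_nonneg ?_ (by simpa using h)))
      rw [Matrix.IsHermitian, Matrix.conjTranspose_eq_transpose_of_trivial,
        (pencilEval_isSymm hsymm x).eq]
    refine isCertified_of_sub_mem ((Matrix.posSemidef_vecMulVec_self u).smul
      (div_nonneg_of_nonpos (not_le.1 hfx).le hu.le)) le_rfl (hmem _ ?_)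
    rw [zero_smul, sub_zero, map_sub, map_sub, map_smul, map_smul, smul_eval,
      eval_linPoly_traceVec_vecMulVec, div_mul_cancel₀ _ hu.ne, sub_self]

lemma exists_isReachable {n m : ℕ} {A : Fin (n+1) → Matrix (Fin m) (Fin m) ℝ}
    (hsymm : ∀ i, (A i).IsSymm) {f : Sym (Fin (n+1)) 1 → ℝ}
    (hf : ∀ x ∈ specSet A, 0 ≤ eval x (linPoly n f)) (k : ℕ) :
    ∃ V, IsReachable A k V ∧ (IsCertified A (linPoly n f) V ∨ k ≤ Module.finrank ℝ V) := by
  induction k with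
  | zero => exact ⟨⊥, isReachable_bot A, Or.inr (Nat.zero_le _)⟩
  | succ k ih =>
    obtain ⟨V, hV, hk⟩ := ih
    by_cases hcert : IsCertified A (linPoly n f) V
    · exact ⟨V, hV.mono_length, Or.inl hcert⟩
    obtain ⟨ℓ, hℓ, r, P, hP, hmem⟩ :=
      (isCertified_or_exists_notMem hsymm hf V).resolve_left hcert
    refine ⟨V ⊔ Submodule.span ℝ {ℓ}, hV.sup_span_singleton hP hmem, Or.inr ?_⟩
    refine (hk.resolve_left hcert).trans_lt (Submodule.finrank_lt_finrank_of_lt ?_)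
    refine lt_of_le_of_ne le_sup_left fun h => hℓ ?_
    rw [h]
    exact Submodule.mem_sup_right (Submodule.mem_span_singleton_self ℓ)
/-- **Sums of squares SDP duality.** A linear polynomial `f` is nonnegative on `S_L` iff
there are quadratic sos-matrices `S₁, …, Sₙ`, symmetric matrices `U₁, …, Uₙ` of size
`s(1)`, matrices `W₁, …, Wₙ` of size `s(2) × s(1)`, a positive semidefinite matrix `S`
and `c ≥ 0` such that (with `W₀ := 0`): `[X]₁ᵀ Uᵢ [X]₁ + [X]₂ᵀ W_{i-1} [X]₁ + tr(L Sᵢ) = 0`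
and `Uᵢ ⪰ WᵢᵀWᵢ` for all `i`, and `f - c + [X]₂ᵀ Wₙ [X]₁ - tr(L S) = 0`. -/
theorem sums_of_squares_SDP_duality
    (n m : ℕ) (A : Fin (n+1) → Matrix (Fin m) (Fin m) ℝ)
    (hsymm : ∀ i, (A i).IsSymm)
    (f : MvPolynomial (Fin n) ℝ) (hf : f.totalDegree ≤ 1) :
    (∀ x ∈ specSet A, 0 ≤ MvPolynomial.eval x f) ↔
      ∃ (S : Fin n → Matrix (Fin m) (Fin m) (MvPolynomial (Fin n) ℝ))
        (U : Fin n → Matrix (Sym (Fin (n+1)) 1) (Sym (Fin (n+1)) 1) ℝ)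
        (W : Fin (n+1) → Matrix (Sym (Fin (n+1)) 2) (Sym (Fin (n+1)) 1) ℝ)
        (S₀ : Matrix (Fin m) (Fin m) ℝ) (c : ℝ),
        W 0 = 0 ∧
        (∀ i, IsSosMatrix (S i)) ∧ (∀ i a b, (S i a b).totalDegree ≤ 2) ∧
        (∀ i, (U i).IsSymm) ∧
        S₀.PosSemidef ∧ 0 ≤ c ∧
        (∀ i : Fin n,
          quadFormPoly (U i) + quadFormPoly (W i.castSucc) +
              (pencilPoly A * S i).trace = 0) ∧
        (∀ i : Fin n, (U i - (W i.succ)ᵀ * W i.succ).PosSemidef) ∧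
        f - MvPolynomial.C c + quadFormPoly (W (Fin.last n)) -
            (pencilPoly A * S₀.map MvPolynomial.C).trace = 0 := by
  constructor
  · intro hpos
    obtain ⟨f, rfl⟩ := mem_range_linPoly hf
    obtain ⟨V, hV, hcert⟩ := exists_isReachable hsymm hpos n
    obtain ⟨S₀, c, hS₀, hc, hmem⟩ := hcert.elim id (isCertified_of_le_finrank hsymm hpos)
    obtain ⟨W', hW', hW'eq⟩ := mem_cubicPart.1 (neg_mem hmem)
    obtain ⟨S, U, W, h0, hlast, hS, hdeg, hU, heq, hpsd⟩ := hV W' hW'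
    refine ⟨S, U, W, S₀, c, h0, hS, hdeg, hU, hS₀, hc, heq, hpsd, ?_⟩
    rw [hlast, hW'eq]
    ring
  · rintro ⟨S, U, W, S₀, c, h0, hS, hdeg, hU, hS₀, hc, heq, hpsd, hfin⟩ x hx
    exact eval_nonneg_of_certificate ⟨S, U, W, h0, rfl, hS, hdeg, hU, heq, hpsd⟩ hS₀ hc hfin hx
end

section
/- Let L be a linear pencil of size m in n variables. Then for every linear polynomial f ∈ ℝ[X₁,…,Xₙ]₁: f ≥ 0 on S_L if and only if f ∈ C_L + √(supp M_L), where √(supp M_L) denotes the radical of the ideal supp M_L = M_L ∩ (−M_L). -/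
open MvPolynomial Matrix

/-- Membership in the convex cone `C_L = {c + Σᵢ uᵢᵀ L uᵢ ∣ c ≥ 0, uᵢ ∈ ℝᵐ}`. -/
def memC {n m : ℕ} (A : Fin (n+1) → Matrix (Fin m) (Fin m) ℝ)
    (p : MvPolynomial (Fin n) ℝ) : Prop :=
  ∃ (c : ℝ), 0 ≤ c ∧ ∃ (k : ℕ) (u : Fin k → Fin m → ℝ),
    p = MvPolynomial.C c +
      ∑ i, ∑ a, ∑ b, MvPolynomial.C (u i a) * pencilPoly A a b * MvPolynomial.C (u i b)

/-- The support `supp M_L = M_L ∩ (-M_L)` of the quadratic module `M_L`. -/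
def memSuppQM {n m : ℕ} (A : Fin (n+1) → Matrix (Fin m) (Fin m) ℝ)
    (p : MvPolynomial (Fin n) ℝ) : Prop :=
  memQM A p ∧ memQM A (-p)

/-- A quadratic module of a commutative ring: a subset containing `1` that is closed under
addition and under multiplication by squares. -/
structure IsQuadraticModule {R : Type*} [CommRing R] (Q : Set R) : Prop where
  one_mem : 1 ∈ Q
  add_mem : ∀ {p q}, p ∈ Q → q ∈ Q → p + q ∈ Q
  sq_mul_mem : ∀ (a : R) {p}, p ∈ Q → a ^ 2 * p ∈ Q

namespace IsQuadraticModule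

variable {R : Type*} [CommRing R] {Q : Set R}

theorem sq_mem (hQ : IsQuadraticModule Q) (a : R) : a ^ 2 ∈ Q := by
  simpa using hQ.sq_mul_mem a hQ.one_mem

theorem zero_mem (hQ : IsQuadraticModule Q) : (0 : R) ∈ Q := by
  simpa using hQ.sq_mem 0

theorem sum_mem (hQ : IsQuadraticModule Q) {ι : Type*} (s : Finset ι) {g : ι → R}
    (hg : ∀ i ∈ s, g i ∈ Q) : ∑ i ∈ s, g i ∈ Q :=
  Finset.sum_induction g (· ∈ Q) (fun _ _ => hQ.add_mem) hQ.zero_mem hg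

/-- The quadratic module `Q + N` generated by a quadratic module `Q` and an ideal `N`. -/
theorem add_ideal (hQ : IsQuadraticModule Q) (N : Ideal R) :
    IsQuadraticModule {x | ∃ p ∈ Q, x - p ∈ N} where
  one_mem := ⟨1, hQ.one_mem, by simp⟩
  add_mem := by
    rintro x y ⟨p, hp, hx⟩ ⟨q, hq, hy⟩
    exact ⟨p + q, hQ.add_mem hp hq, by simpa [add_sub_add_comm] using N.add_mem hx hy⟩
  sq_mul_mem := by
    rintro a x ⟨p, hp, hx⟩
    exact ⟨_, hQ.sq_mul_mem a hp, by simpa [mul_sub] using N.mul_mem_left (a ^ 2) hx⟩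

variable [Algebra ℝ R]

theorem exists_two_mul_eq_one (R : Type*) [CommRing R] [Algebra ℝ R] : ∃ h : R, 2 * h = 1 :=
  ⟨algebraMap ℝ R (1 / 2), by
    rw [← map_ofNat (algebraMap ℝ R) 2, ← map_mul]; norm_num⟩

/-- The support `Q ∩ -Q` of a quadratic module, as an ideal. -/
def support (hQ : IsQuadraticModule Q) : Ideal R where
  carrier := {p | p ∈ Q ∧ -p ∈ Q}
  add_mem' := by
    rintro p q ⟨hp, hp'⟩ ⟨hq, hq'⟩
    exact ⟨hQ.add_mem hp hq, by rw [neg_add]; exact hQ.add_mem hp' hq'⟩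
  zero_mem' := ⟨hQ.zero_mem, by simpa using hQ.zero_mem⟩
  smul_mem' := by
    rintro a p ⟨hp, hp'⟩
    obtain ⟨h, hh⟩ := exists_two_mul_eq_one R
    constructor
    · convert hQ.add_mem (hQ.sq_mul_mem (h * (a + 1)) hp) (hQ.sq_mul_mem (h * (a - 1)) hp') using 1
      rw [smul_eq_mul]
      linear_combination -(a * p * (2 * h + 1)) * hh
    · convert hQ.add_mem (hQ.sq_mul_mem (h * (a + 1)) hp') (hQ.sq_mul_mem (h * (a - 1)) hp) using 1
      rw [smul_eq_mul]
      linear_combination (a * p * (2 * h + 1)) * hh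

theorem mem_support {hQ : IsQuadraticModule Q} {p : R} : p ∈ hQ.support ↔ p ∈ Q ∧ -p ∈ Q :=
  Iff.rfl

theorem pow_four_mem_support (hQ : IsQuadraticModule Q) {p q : R} (hp : p ∈ Q) (hq : q ∈ Q)
    (hs : (p + q) ^ 2 ∈ hQ.support) : p ^ 4 ∈ hQ.support := by
  obtain ⟨h, hh⟩ := exists_two_mul_eq_one R
  have hI : ∀ a, a * (p + q) ^ 2 ∈ Q := fun a => (hQ.support.mul_mem_left a hs).1
  have upper : h * p ^ 2 - p ^ 3 ∈ Q := by
    have e := hQ.sq_mem (h * (p - (p + q) * p))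
    convert hQ.add_mem (hQ.add_mem (hQ.add_mem e e) (hQ.sq_mul_mem p hq)) (hI (-h * p ^ 2)) using 1
    linear_combination (-h * (p - (p + q) * p) ^ 2 + (p + q) * p ^ 2) * hh
  have lower : p ^ 4 - p ^ 3 ∈ Q := by
    convert hQ.add_mem (hQ.add_mem (hQ.sq_mem (p ^ 2 - h * (p + q))) (hQ.sq_mul_mem p hq))
      (hI (-h ^ 2)) using 1
    linear_combination ((p + q) * p ^ 2) * hh
  have bounded : p ^ 4 * (h ^ 2 - p ^ 2) ∈ Q := by
    have e := hQ.sq_mul_mem (h * ((h - p) * p ^ 2)) hQ.one_mem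
    convert hQ.add_mem (hQ.add_mem (hQ.sq_mul_mem ((h + p) * p) upper) (hQ.add_mem e e))
      (hQ.sq_mul_mem ((h - p) * p ^ 2) hp) using 1
    have : h - 2 * h ^ 2 = 0 := by linear_combination -h * hh
    linear_combination ((h - p) ^ 2 * p ^ 4) * this - (p ^ 4 * (h ^ 2 - p ^ 2)) * hh
  have neg : -(2 * p ^ 4) ∈ Q := by
    convert hQ.add_mem (hQ.add_mem (hQ.sq_mul_mem (1 + 2 * p) lower) (hQ.sq_mul_mem p hp))
      (hQ.sq_mul_mem 2 bounded) using 1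
    linear_combination -(p ^ 4 * (2 * h + 1)) * hh
  refine ⟨by convert hQ.sq_mem (p ^ 2) using 1; ring, ?_⟩
  convert hQ.add_mem (hQ.sq_mul_mem h neg) (hQ.sq_mul_mem h neg) using 1
  linear_combination (p ^ 4 * (2 * h + 1)) * hh

theorem support_add_span_le_radical (hQ : IsQuadraticModule Q) {t : R}
    (ht : t ^ 2 ∈ hQ.support) :
    (hQ.add_ideal (Ideal.span {t})).support ≤ hQ.support.radical := by
  rintro x ⟨⟨p, hp, hx⟩, ⟨q, hq, hx'⟩⟩
  obtain ⟨a, ha⟩ := Ideal.mem_span_singleton'.1 hx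
  obtain ⟨b, hb⟩ := Ideal.mem_span_singleton'.1 hx'
  have hpr : p ∈ hQ.support.radical := by
    refine ⟨4, hQ.pow_four_mem_support hp hq ?_⟩
    have : (p + q) ^ 2 = (a + b) ^ 2 * t ^ 2 := by
      rw [show p + q = -((a + b) * t) by linear_combination ha + hb]; ring
    rw [this]
    exact hQ.support.mul_mem_left _ ht
  have htr : a * t ∈ hQ.support.radical := Ideal.mul_mem_left _ _ ⟨2, ht⟩
  rw [show x = p + a * t by linear_combination -ha]
  exact Ideal.add_mem _ hpr htr

theorem mem_radical_of_add_pow_mem (k : ℕ) : ∀ {Q : Set R} (hQ : IsQuadraticModule Q) {p q : R},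
    p ∈ Q → q ∈ Q → (p + q) ^ 2 ^ k ∈ hQ.support → p ∈ hQ.support.radical := by
  induction k with
  | zero =>
    intro Q hQ p q hp hq hs
    refine Ideal.le_radical ⟨hp, ?_⟩
    rw [pow_zero, pow_one] at hs
    convert hQ.add_mem hq hs.2 using 1
    ring
  | succ k ih =>
    intro Q hQ p q hp hq hs
    rw [pow_succ, pow_mul] at hs
    have hle := hQ.support_add_span_le_radical hs
    have hsub : ∀ x ∈ Q, x ∈ {x | ∃ y ∈ Q, x - y ∈ Ideal.span {(p + q) ^ 2 ^ k}} := by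
      intro x hx
      exact ⟨x, hx, by simp⟩
    have hmem := Ideal.mem_span_singleton_self ((p + q) ^ 2 ^ k)
    have hpr := ih (hQ.add_ideal (Ideal.span {(p + q) ^ 2 ^ k})) (hsub p hp) (hsub q hq)
      ⟨⟨0, hQ.zero_mem, by rwa [sub_zero]⟩, ⟨0, hQ.zero_mem, by rwa [sub_zero, neg_mem_iff]⟩⟩
    simpa using Ideal.radical_mono hle hpr

/-- The radical of the support of a quadratic module `Q` is `Q`-convex. -/
theorem mem_radical_of_add_mem (hQ : IsQuadraticModule Q) {p q : R} (hp : p ∈ Q) (hq : q ∈ Q)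
    (hs : p + q ∈ hQ.support.radical) : p ∈ hQ.support.radical := by
  obtain ⟨k, hk⟩ := hs
  exact mem_radical_of_add_pow_mem k hQ hp hq
    (hQ.support.pow_mem_of_pow_mem hk (Nat.lt_two_pow_self).le)

theorem mem_radical_of_sum_mem (hQ : IsQuadraticModule Q) {ι : Type*} (s : Finset ι) {g : ι → R}
    (hg : ∀ i ∈ s, g i ∈ Q) (hs : ∑ i ∈ s, g i ∈ hQ.support.radical) {i : ι} (hi : i ∈ s) :
    g i ∈ hQ.support.radical := by
  classical
  rw [← Finset.add_sum_erase s g hi] at hs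
  exact hQ.mem_radical_of_add_mem (hg i hi)
    (hQ.sum_mem _ fun j hj => hg j (Finset.mem_of_mem_erase hj)) hs

end IsQuadraticModule

theorem isCompact_convexHull_of_finiteDimensional {E : Type*} [AddCommGroup E] [Module ℝ E]
    [FiniteDimensional ℝ E] [TopologicalSpace E] [IsTopologicalAddGroup E] [ContinuousSMul ℝ E]
    {s : Set E} (hs : IsCompact s) : IsCompact (convexHull ℝ s) := by
  have key : convexHull ℝ s = ⋃ k ∈ Finset.range (Module.finrank ℝ E + 2),
      (fun p : (Fin k → ℝ) × (Fin k → E) => ∑ i, p.1 i • p.2 i) ''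
        (stdSimplex ℝ (Fin k) ×ˢ Set.univ.pi fun _ => s) := by
    ext x
    simp only [Set.mem_iUnion, exists_prop]
    constructor
    · intro hx
      obtain ⟨ι, _, z, w, hz, hind, hw, hw1, rfl⟩ := eq_pos_convex_span_of_mem_convexHull hx
      refine ⟨Fintype.card ι, ?_, ⟨w ∘ (Fintype.equivFin ι).symm, z ∘ (Fintype.equivFin ι).symm⟩,
        ⟨⟨fun i => (hw _).le, ?_⟩, fun i _ => hz ⟨_, rfl⟩⟩, ?_⟩
      · have := hind.card_le_finrank_succ.trans
          (Nat.succ_le_succ (Submodule.finrank_le (vectorSpan ℝ (Set.range z))))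
        simp only [Finset.mem_range]
        omega
      · rw [← hw1]
        exact (Fintype.equivFin ι).symm.sum_comp w
      · exact (Fintype.equivFin ι).symm.sum_comp fun i => w i • z i
    · rintro ⟨k, -, ⟨w, z⟩, ⟨⟨hw, hw1⟩, hz⟩, rfl⟩
      exact mem_convexHull_of_exists_fintype w z hw hw1 (fun i => hz i trivial) rfl
  rw [key]
  refine Finset.isCompact_biUnion _ fun k _ => ?_
  exact ((isCompact_stdSimplex ℝ (Fin k)).prod (isCompact_univ_pi fun _ => hs)).image (by fun_prop)

/-- Let `K` be the convex cone generated by `δ` and the values `B u u` of a bilinear map. If every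
representation of an element of the subspace `V` as an element of `K` is degenerate modulo `V`,
then every point outside `K + V` is strictly separated from `K` by a functional that is positive
at `δ`. -/
theorem exists_functional_of_notMem_cone_add {m : ℕ} {E : Type*} [AddCommGroup E] [Module ℝ E]
    [FiniteDimensional ℝ E] (V : Submodule ℝ E) (δ e : E)
    (B : (Fin m → ℝ) →ₗ[ℝ] (Fin m → ℝ) →ₗ[ℝ] E)
    (hB : ∀ (c : ℝ) (k : ℕ) (u : Fin k → Fin m → ℝ), 0 ≤ c → c • δ + ∑ i, B (u i) (u i) ∈ V →
      c = 0 ∧ ∀ i v, B (u i) v ∈ V ∧ B v (u i) ∈ V)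
    (he : ∀ (c : ℝ) (k : ℕ) (u : Fin k → Fin m → ℝ), 0 ≤ c →
      e - (c • δ + ∑ i, B (u i) (u i)) ∉ V) :
    ∃ ψ : E →ₗ[ℝ] ℝ, 0 < ψ δ ∧ ψ e < 0 ∧ ∀ v, 0 ≤ ψ (B v v) := by
  let U : Submodule ℝ (Fin m → ℝ) :=
    { carrier := {u | ∀ v, B u v ∈ V ∧ B v u ∈ V}
      add_mem' := fun {a b} ha hb v => by
        simpa using ⟨V.add_mem (ha v).1 (hb v).1, V.add_mem (ha v).2 (hb v).2⟩
      zero_mem' := fun v => by simp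
      smul_mem' := fun c a ha v => by
        simpa using ⟨V.smul_mem c (ha v).1, V.smul_mem c (ha v).2⟩ }
  have hU : ∀ u, u ∈ U ↔ ∀ v, B u v ∈ V ∧ B v u ∈ V := fun u => Iff.rfl
  obtain ⟨W, hW⟩ := U.exists_isCompl
  obtain ⟨d, π, hπ⟩ : ∃ (d : ℕ) (π : E →ₗ[ℝ] (Fin d → ℝ)), ∀ x, π x = 0 ↔ x ∈ V :=
    ⟨_, (Module.finBasis ℝ (E ⧸ V)).equivFun.toLinearMap ∘ₗ V.mkQ, fun x => by simp⟩
  let S : Set (ℝ × (Fin m → ℝ) × ℝ) :=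
    {p | 0 ≤ p.1 ∧ 0 ≤ p.2.2 ∧ p.2.1 ∈ W ∧ p.1 + p.2.1 ⬝ᵥ p.2.1 + p.2.2 = 1}
  let F : ℝ × (Fin m → ℝ) × ℝ → (Fin d → ℝ) := fun p =>
    p.1 • π δ + π (B p.2.1 p.2.1) - p.2.2 • π e
  have hS : IsCompact S := by
    refine IsCompact.of_isClosed_subset
      (isCompact_Icc (a := ((0 : ℝ), (-1 : Fin m → ℝ), (0 : ℝ))) (b := (1, 1, 1))) ?_ ?_
    · refine (isClosed_le continuous_const continuous_fst).inter
        ((isClosed_le continuous_const (continuous_snd.comp continuous_snd)).inter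
        ((W.closed_of_finiteDimensional.preimage (continuous_fst.comp continuous_snd)).inter
          (isClosed_eq ?_ continuous_const)))
      simp only [dotProduct]
      fun_prop
    · rintro ⟨c, w, t⟩ ⟨hc, ht, -, h1⟩
      dsimp only at hc ht h1
      have hw0 : 0 ≤ w ⬝ᵥ w := Finset.sum_nonneg fun i _ => mul_self_nonneg _
      have hw : ∀ a, |w a| ≤ 1 := fun a => by
        have : w a * w a ≤ w ⬝ᵥ w :=
          Finset.single_le_sum (f := fun i => w i * w i) (fun i _ => mul_self_nonneg _)
            (Finset.mem_univ a)
        rw [← sq_le_one_iff_abs_le_one]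
        nlinarith
      refine ⟨⟨hc, fun a => (abs_le.1 (hw a)).1, ht⟩, ?_, fun a => (abs_le.1 (hw a)).2, ?_⟩ <;>
      · dsimp only
        linarith
  have hF : Continuous F := by
    let B' : (Fin m → ℝ) →ₗ[ℝ] (Fin m → ℝ) →L[ℝ] (Fin d → ℝ) :=
      LinearMap.toContinuousLinearMap.toLinearMap ∘ₗ (B.compr₂ π)
    have hB' : Continuous fun w => B' w w :=
      B'.continuous_of_finiteDimensional.clm_apply continuous_id
    have hB'' : Continuous fun w => π (B w w) := hB'
    have := hB''.comp (continuous_fst.comp (continuous_snd (X := ℝ) (Y := (Fin m → ℝ) × ℝ)))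
    exact ((continuous_fst.smul continuous_const).add this).sub
      ((continuous_snd.comp continuous_snd).smul continuous_const)
  have h0 : (0 : Fin d → ℝ) ∉ convexHull ℝ (F '' S) := by
    intro h
    obtain ⟨ι, _, l, z, hl, hl1, hz, hsum⟩ := mem_convexHull_iff_exists_fintype.1 h
    choose p hp hpz using hz
    let σ := (Fintype.equivFin ι).symm
    let c := ∑ i, l i * (p i).1
    let t := ∑ i, l i * (p i).2.2
    let u : Fin (Fintype.card ι) → Fin m → ℝ := fun i => √(l (σ i)) • (p (σ i)).2.1
    have hc : 0 ≤ c := Finset.sum_nonneg fun i _ => mul_nonneg (hl i) (hp i).1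
    have ht : 0 ≤ t := Finset.sum_nonneg fun i _ => mul_nonneg (hl i) (hp i).2.1
    have hu : ∑ i, B (u i) (u i) = ∑ i, l i • B (p i).2.1 (p i).2.1 := by
      rw [← σ.sum_comp]
      refine Finset.sum_congr rfl fun i _ => ?_
      simp only [u, map_smul, LinearMap.smul_apply, smul_smul, Real.mul_self_sqrt (hl _)]
    have hmem : (c • δ + ∑ i, B (u i) (u i)) - t • e ∈ V := by
      rw [← hπ, hu, ← hsum]
      simp only [← hpz, F, map_sub, map_add, map_smul, map_sum, c, t, Finset.sum_smul, smul_sub,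
        smul_add, Finset.sum_add_distrib, Finset.sum_sub_distrib, smul_smul]
    rcases ht.eq_or_lt with ht0 | ht0
    · rw [← ht0, zero_smul, sub_zero] at hmem
      obtain ⟨hc0, hu0⟩ := hB c _ u hc hmem
      have hw : ∀ i, l i * ((p i).2.1 ⬝ᵥ (p i).2.1) = 0 := by
        intro i
        have hi : u (σ.symm i) = 0 := by
          refine Submodule.disjoint_def.1 hW.disjoint _ ((hU _).2 (hu0 _)) (W.smul_mem _ ?_)
          exact (hp _).2.2.1
        have : u (σ.symm i) ⬝ᵥ u (σ.symm i) = l i * ((p i).2.1 ⬝ᵥ (p i).2.1) := by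
          simp only [u, Equiv.apply_symm_apply, dotProduct_smul, smul_dotProduct,
            Real.mul_self_sqrt (hl _), smul_eq_mul, ← mul_assoc]
        rw [← this, hi, zero_dotProduct]
      have : ∑ i, l i = c + ∑ i, l i * ((p i).2.1 ⬝ᵥ (p i).2.1) + t := by
        simp only [c, t, ← Finset.sum_add_distrib]
        refine Finset.sum_congr rfl fun i _ => ?_
        rw [← mul_add, ← mul_add, (hp i).2.2.2, mul_one]
      simp [hl1, hc0, ← ht0, hw] at this
    · refine he (t⁻¹ * c) _ (fun i => √(t⁻¹) • u i) (mul_nonneg (inv_nonneg.2 ht) hc) ?_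
      convert V.smul_mem (-t⁻¹) hmem using 1
      simp only [map_smul, LinearMap.smul_apply, smul_smul, Real.mul_self_sqrt (inv_nonneg.2 ht),
        ← Finset.smul_sum]
      have hte : e = (t⁻¹ * t) • e := by rw [inv_mul_cancel₀ ht0.ne', one_smul]
      nth_rewrite 1 [hte]
      module
  obtain ⟨φ, r, hr, hφ⟩ := geometric_hahn_banach_point_closed (convex_convexHull ℝ _)
    (isCompact_convexHull_of_finiteDimensional (hS.image hF)).isClosed h0
  rw [map_zero] at hr
  have hpos : ∀ p ∈ S, 0 < φ (F p) := fun p hp =>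
    hr.trans (hφ _ (subset_convexHull ℝ _ ⟨p, hp, rfl⟩))
  have hV : ∀ x ∈ V, φ (π x) = 0 := fun x hx => by rw [(hπ x).2 hx, map_zero]
  refine ⟨φ.toLinearMap ∘ₗ π, ?_, ?_, fun v => ?_⟩
  · simpa [F] using hpos (1, 0, 0) ⟨by simp, by simp, by simp, by simp⟩
  · simpa [F] using hpos (0, 0, 1) ⟨by simp, by simp, by simp, by simp⟩
  · obtain ⟨a, ha, w, hw, rfl⟩ := Submodule.mem_sup.1
      (show v ∈ U ⊔ W by rw [hW.sup_eq_top]; trivial)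
    have hred : φ (π (B (a + w) (a + w))) = φ (π (B w w)) := by
      simp only [map_add, LinearMap.add_apply, hV _ (ha a).1, hV _ (ha w).1, hV _ (ha w).2]
      ring
    change 0 ≤ φ (π (B (a + w) (a + w)))
    rw [hred]
    rcases eq_or_ne w 0 with rfl | hw0
    · simp
    · have hpw : 0 < w ⬝ᵥ w :=
        lt_of_le_of_ne (Finset.sum_nonneg fun i _ => mul_self_nonneg _)
          (Ne.symm (mt dotProduct_self_eq_zero.1 hw0))
      have := hpos (0, (√(w ⬝ᵥ w))⁻¹ • w, 0) ⟨by simp, by simp, W.smul_mem _ hw, by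
        simp only [dotProduct_smul, smul_dotProduct, smul_eq_mul, ← mul_assoc]
        rw [← mul_inv, Real.mul_self_sqrt hpw.le, inv_mul_cancel₀ hpw.ne']
        simp⟩
      simp only [F, map_smul, LinearMap.smul_apply, smul_smul, zero_smul, zero_add, sub_zero,
        smul_eq_mul] at this
      rw [← mul_inv, Real.mul_self_sqrt hpw.le] at this
      exact (pos_of_mul_pos_right this (inv_nonneg.2 hpw.le)).le

/-- The affine polynomial with constant term `e 0` and linear coefficients `e 1, ..., e n`. -/
noncomputable def affinePoly (n : ℕ) : (Fin (n + 1) → ℝ) →ₗ[ℝ] MvPolynomial (Fin n) ℝ where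
  toFun e := C (e 0) + ∑ i : Fin n, X i * C (e i.succ)
  map_add' e e' := by
    simp only [Pi.add_apply, map_add, mul_add, Finset.sum_add_distrib]
    ring
  map_smul' c e := by
    simp only [Pi.smul_apply, smul_eq_mul, map_mul, RingHom.id_apply, MvPolynomial.smul_eq_C_mul,
      mul_add, Finset.mul_sum]
    congr 1
    exact Finset.sum_congr rfl fun i _ => by ring

theorem affinePoly_apply {n : ℕ} (e : Fin (n + 1) → ℝ) :
    affinePoly n e = C (e 0) + ∑ i : Fin n, X i * C (e i.succ) := rfl

theorem exists_affinePoly_eq {n : ℕ} {f : MvPolynomial (Fin n) ℝ} (hf : f.totalDegree ≤ 1) :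
    ∃ e, affinePoly n e = f := by
  classical
  refine ⟨Fin.cons (coeff 0 f) fun i => coeff (Finsupp.single i 1) f, ?_⟩
  rw [affinePoly_apply]
  ext d
  simp only [Fin.cons_zero, Fin.cons_succ, coeff_add, coeff_C, coeff_sum, mul_comm (X _), coeff_C_mul, coeff_X]
  rcases lt_or_ge 1 d.degree with hd | hd
  · rw [coeff_eq_zero_of_totalDegree_lt (lt_of_le_of_lt hf hd), if_neg, zero_add]
    · refine Finset.sum_eq_zero fun i _ => ?_
      rw [if_neg, mul_zero]
      rintro rfl
      simp at hd
    · rintro rfl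
      simp at hd
  · rcases Nat.le_one_iff_eq_zero_or_eq_one.1 hd with h0 | h1
    · obtain rfl := (Finsupp.degree_eq_zero_iff d).1 h0
      simp
    · obtain ⟨i, rfl⟩ := (Finsupp.sum_eq_one_iff d).1 h1
      rw [if_neg (by simp [eq_comm]), zero_add, Finset.sum_eq_single i]
      · simp
      · intro j _ hj
        rw [if_neg, mul_zero]
        simpa [Finsupp.single_left_inj] using hj
      · simp

section Pencil

variable {n m : ℕ} (A : Fin (n + 1) → Matrix (Fin m) (Fin m) ℝ)

/-- The coefficient vector of the affine polynomial `uᵀ L v`. -/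
noncomputable def pencilForm : (Fin m → ℝ) →ₗ[ℝ] (Fin m → ℝ) →ₗ[ℝ] (Fin (n + 1) → ℝ) :=
  LinearMap.mk₂ ℝ (fun u v i => u ⬝ᵥ A i *ᵥ v)
    (fun u u' v => by ext i; simp [add_dotProduct])
    (fun c u v => by ext i; simp [smul_dotProduct])
    (fun u v v' => by ext i; simp [mulVec_add, dotProduct_add])
    (fun c u v => by ext i; simp [mulVec_smul, dotProduct_smul])

theorem pencilForm_apply (u v : Fin m → ℝ) (i : Fin (n + 1)) :
    pencilForm A u v i = u ⬝ᵥ A i *ᵥ v := rfl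

variable {A} in
theorem pencilForm_comm (hsymm : ∀ i, (A i).IsSymm) (u v : Fin m → ℝ) :
    pencilForm A u v = pencilForm A v u := by
  ext i
  rw [pencilForm_apply, pencilForm_apply, dotProduct_mulVec, ← mulVec_transpose, hsymm i,
    dotProduct_comm]

theorem affinePoly_pencilForm (u v : Fin m → ℝ) :
    affinePoly n (pencilForm A u v) = ∑ a, ∑ b, C (u a) * pencilPoly A a b * C (v b) := by
  simp only [affinePoly_apply, pencilForm_apply, pencilPoly, dotProduct, mulVec, map_sum, map_mul,
    mul_add, add_mul, Finset.sum_add_distrib, Finset.mul_sum, Finset.sum_mul]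
  congr 1
  · simp only [mul_assoc]
  · rw [Finset.sum_comm]
    refine Finset.sum_congr rfl fun a _ => ?_
    rw [Finset.sum_comm]
    refine Finset.sum_congr rfl fun b _ => Finset.sum_congr rfl fun i _ => ?_
    ring

theorem vLv_C (u : Fin m → ℝ) : vLv A (fun a => C (u a)) = affinePoly n (pencilForm A u u) :=
  (affinePoly_pencilForm A u u).symm

variable {A} in
theorem vLv_mul_C_add_mul_C (hsymm : ∀ i, (A i).IsSymm) (p q : MvPolynomial (Fin n) ℝ)
    (u v : Fin m → ℝ) :
    vLv A (fun a => p * C (u a) + q * C (v a)) =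
      p ^ 2 * affinePoly n (pencilForm A u u) + 2 * p * q * affinePoly n (pencilForm A u v) +
        q ^ 2 * affinePoly n (pencilForm A v v) := by
  have h2 : 2 * p * q * affinePoly n (pencilForm A u v) =
      p * q * affinePoly n (pencilForm A u v) + p * q * affinePoly n (pencilForm A v u) := by
    rw [pencilForm_comm hsymm v u]
    ring
  rw [h2]
  simp only [affinePoly_pencilForm, vLv, Finset.mul_sum, ← Finset.sum_add_distrib]
  refine Finset.sum_congr rfl fun a _ => Finset.sum_congr rfl fun b _ => ?_
  ring

theorem memQM_sq (q : MvPolynomial (Fin n) ℝ) : memQM A (q ^ 2) :=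
  ⟨1, 0, fun _ => q, Fin.elim0, by simp⟩

variable {A} in
theorem memQM.add {p p' : MvPolynomial (Fin n) ℝ} (h : memQM A p) (h' : memQM A p') :
    memQM A (p + p') := by
  obtain ⟨k, r, q, v, rfl⟩ := h
  obtain ⟨k', r', q', v', rfl⟩ := h'
  refine ⟨k + k', r + r', Fin.append q q', Fin.append v v', ?_⟩
  simp only [Fin.sum_univ_add, Fin.append_left, Fin.append_right]
  ring

theorem vLv_mul (a : MvPolynomial (Fin n) ℝ) (v : Fin m → MvPolynomial (Fin n) ℝ) :
    vLv A (fun b => a * v b) = a ^ 2 * vLv A v := by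
  simp only [vLv, Finset.mul_sum]
  refine Finset.sum_congr rfl fun b _ => Finset.sum_congr rfl fun b' _ => ?_
  ring

variable {A} in
theorem memQM.sq_mul (a : MvPolynomial (Fin n) ℝ) {p : MvPolynomial (Fin n) ℝ}
    (h : memQM A p) : memQM A (a ^ 2 * p) := by
  obtain ⟨k, r, q, v, rfl⟩ := h
  refine ⟨k, r, fun i => a * q i, fun j b => a * v j b, ?_⟩
  simp only [vLv_mul, mul_add, Finset.mul_sum, mul_pow]

theorem isQuadraticModule_memQM : IsQuadraticModule {p | memQM A p} where
  one_mem := by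
    rw [Set.mem_ofPred_eq, ← one_pow 2]
    exact memQM_sq A 1
  add_mem := memQM.add
  sq_mul_mem := memQM.sq_mul

theorem memQM_vLv (v : Fin m → MvPolynomial (Fin n) ℝ) : memQM A (vLv A v) :=
  ⟨0, 1, Fin.elim0, fun _ => v, by simp⟩

theorem eval_vLv (v : Fin m → MvPolynomial (Fin n) ℝ) (x : Fin n → ℝ) :
    eval x (vLv A v) =
      (fun a => eval x (v a)) ⬝ᵥ pencilEval A x *ᵥ (fun a => eval x (v a)) := by
  simp only [vLv, pencilPoly, pencilEval, dotProduct, mulVec, map_sum, map_mul, map_add, eval_C,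
    eval_X, Matrix.add_apply, Matrix.sum_apply, Matrix.smul_apply, smul_eq_mul, Finset.mul_sum,
    mul_assoc]

variable {A}

theorem eval_vLv_nonneg {x : Fin n → ℝ} (hx : x ∈ specSet A)
    (v : Fin m → MvPolynomial (Fin n) ℝ) : 0 ≤ eval x (vLv A v) := by
  rw [eval_vLv]
  simpa using (posSemidef_iff_dotProduct_mulVec.1 hx).2 fun a => eval x (v a)

theorem eval_nonneg_of_memQM {x : Fin n → ℝ} (hx : x ∈ specSet A) {p : MvPolynomial (Fin n) ℝ}
    (hp : memQM A p) : 0 ≤ eval x p := by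
  obtain ⟨k, r, q, v, rfl⟩ := hp
  simp only [map_add, map_sum, map_pow]
  exact add_nonneg (Finset.sum_nonneg fun i _ => sq_nonneg _)
    (Finset.sum_nonneg fun j _ => eval_vLv_nonneg hx _)

theorem eval_nonneg_of_memC {x : Fin n → ℝ} (hx : x ∈ specSet A) {p : MvPolynomial (Fin n) ℝ}
    (hp : memC A p) : 0 ≤ eval x p := by
  obtain ⟨c, hc, k, u, rfl⟩ := hp
  rw [map_add, eval_C, map_sum]
  exact add_nonneg hc (Finset.sum_nonneg fun i _ => eval_vLv_nonneg hx fun a => C (u i a))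

theorem eval_eq_zero_of_pow_memSuppQM {x : Fin n → ℝ} (hx : x ∈ specSet A)
    {p : MvPolynomial (Fin n) ℝ} {k : ℕ} (hp : memSuppQM A (p ^ k)) : eval x p = 0 := by
  have h1 := eval_nonneg_of_memQM hx hp.1
  have h2 := eval_nonneg_of_memQM hx hp.2
  rw [map_neg] at h2
  rw [map_pow] at h1 h2
  exact eq_zero_of_pow_eq_zero (le_antisymm (neg_nonneg.1 h2) h1)

theorem affinePoly_pencilForm_mem_radical (hsymm : ∀ i, (A i).IsSymm) {u : Fin m → ℝ}
    (hu : affinePoly n (pencilForm A u u) ∈ (isQuadraticModule_memQM A).support.radical)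
    (v : Fin m → ℝ) :
    affinePoly n (pencilForm A u v) ∈ (isQuadraticModule_memQM A).support.radical := by
  have hQ := isQuadraticModule_memQM A
  set s := affinePoly n (pencilForm A u u)
  set a := affinePoly n (pencilForm A u v) with ha
  set b := affinePoly n (pencilForm A v v) with hb
  have h1 := memQM_vLv A fun i => b * C (u i) + (-a) * C (v i)
  have h2 := memQM_vLv A fun i => 1 * C (u i) + (-a) * C (v i)
  rw [vLv_mul_C_add_mul_C hsymm] at h1 h2
  refine (Ideal.radical_isRadical _) ⟨2, hQ.mem_radical_of_add_mem (hQ.sq_mem a)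
    (hQ.add_mem (hQ.add_mem h1 h2) (hQ.sq_mem a)) ?_⟩
  convert Ideal.mul_mem_left _ (b ^ 2 + 1) hu using 1
  rw [← ha, ← hb]
  ring

theorem exists_mem_specSet_eval_neg (hsymm : ∀ i, (A i).IsSymm)
    (h1 : 1 ∉ (isQuadraticModule_memQM A).support.radical) (e : Fin (n + 1) → ℝ)
    (he : ∀ g, memC A g → affinePoly n e - g ∉ (isQuadraticModule_memQM A).support.radical) :
    ∃ x ∈ specSet A, eval x (affinePoly n e) < 0 := by
  have hQ := isQuadraticModule_memQM A
  let J := (isQuadraticModule_memQM A).support.radical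
  let δ : Fin (n + 1) → ℝ := Pi.single 0 1
  have hδ : ∀ c : ℝ, affinePoly n (c • δ) = C c := fun c => by
    rw [affinePoly_apply]
    simp [δ]
  let V := (J.restrictScalars ℝ).comap (affinePoly n)
  have hB : ∀ (c : ℝ) (k : ℕ) (u : Fin k → Fin m → ℝ), 0 ≤ c →
      c • δ + ∑ i, pencilForm A (u i) (u i) ∈ V →
      c = 0 ∧ ∀ i v, pencilForm A (u i) v ∈ V ∧ pencilForm A v (u i) ∈ V := by
    intro c k u hc hmem
    have hform : ∀ i, affinePoly n (pencilForm A (u i) (u i)) ∈ {p | memQM A p} := fun i => by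
      rw [← vLv_C]
      exact memQM_vLv A _
    have hconst : (C c : MvPolynomial (Fin n) ℝ) ∈ {p | memQM A p} := by
      have := hQ.sq_mem (C √c)
      rwa [← map_pow, Real.sq_sqrt hc] at this
    have hmem' : C c + ∑ i, affinePoly n (pencilForm A (u i) (u i)) ∈ J := by
      rw [← hδ, ← map_sum, ← map_add]
      exact hmem
    have hsum := hQ.sum_mem Finset.univ fun i _ => hform i
    refine ⟨?_, fun i v => ?_⟩
    · by_contra hc0
      refine h1 ?_
      have := Ideal.mul_mem_left J (C c⁻¹) (hQ.mem_radical_of_add_mem hconst hsum hmem')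
      rwa [← map_mul, inv_mul_cancel₀ hc0, map_one] at this
    · rw [add_comm] at hmem'
      have hi := hQ.mem_radical_of_sum_mem Finset.univ (fun i _ => hform i)
        (hQ.mem_radical_of_add_mem hsum hconst hmem') (Finset.mem_univ i)
      have hv := affinePoly_pencilForm_mem_radical hsymm hi v
      exact ⟨hv, by rw [pencilForm_comm hsymm]; exact hv⟩
  have he' : ∀ (c : ℝ) (k : ℕ) (u : Fin k → Fin m → ℝ), 0 ≤ c →
      e - (c • δ + ∑ i, pencilForm A (u i) (u i)) ∉ V := by
    intro c k u hc hmem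
    refine he _ ⟨c, hc, k, u, rfl⟩ ?_
    have : affinePoly n (e - (c • δ + ∑ i, pencilForm A (u i) (u i))) ∈ J := hmem
    simpa only [map_sub, map_add, map_sum, hδ, affinePoly_pencilForm] using this
  obtain ⟨ψ, hψδ, hψe, hψ⟩ := exists_functional_of_notMem_cone_add V δ e (pencilForm A) hB he'
  let x : Fin n → ℝ := fun i => (ψ δ)⁻¹ * ψ (Pi.single i.succ 1)
  have hx : ∀ w, eval x (affinePoly n w) = (ψ δ)⁻¹ * ψ w := by
    intro w
    have hw : ψ w = w 0 * ψ δ + ∑ i : Fin n, w i.succ * ψ (Pi.single i.succ 1) := by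
      conv_lhs => rw [pi_eq_sum_univ' w]
      rw [map_sum, Fin.sum_univ_succ]
      simp only [map_smul, smul_eq_mul]
      rfl
    rw [affinePoly_apply, hw]
    simp only [map_add, map_sum, map_mul, eval_C, eval_X, x, mul_add, Finset.mul_sum]
    congr 1
    · field_simp
    · exact Finset.sum_congr rfl fun i _ => by ring
  refine ⟨x, ?_, ?_⟩
  · refine PosSemidef.of_dotProduct_mulVec_nonneg ?_ fun v => ?_
    · rw [IsHermitian, conjTranspose_eq_transpose_of_trivial, pencilEval, transpose_add,
        transpose_sum, hsymm 0]
      simp only [transpose_smul, (hsymm _).eq]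
    · have := eval_vLv A (fun a => C (v a)) x
      rw [vLv_C, hx] at this
      simp only [eval_C] at this
      rw [star_trivial, ← this]
      exact mul_nonneg (inv_nonneg.2 hψδ.le) (hψ v)
  · rw [hx]
    exact mul_neg_of_pos_of_neg (inv_pos.2 hψδ) hψe

end Pencil

/-- **Corollary.** A linear polynomial `f` is nonnegative on `S_L` if and only if
`f ∈ C_L + √(supp M_L)`, the radical `√` of the ideal `supp M_L = M_L ∩ (-M_L)` being
`{p ∣ pᵏ ∈ supp M_L for some k ≥ 1}`. -/
theorem nonneg_on_spectrahedron_iff_mem_cone_add_radical_support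
    (n m : ℕ) (A : Fin (n+1) → Matrix (Fin m) (Fin m) ℝ)
    (hsymm : ∀ i, (A i).IsSymm)
    (f : MvPolynomial (Fin n) ℝ) (hf : f.totalDegree ≤ 1) :
    (∀ x ∈ specSet A, 0 ≤ MvPolynomial.eval x f) ↔
      ∃ g p : MvPolynomial (Fin n) ℝ,
        memC A g ∧ (∃ k : ℕ, 0 < k ∧ memSuppQM A (p^k)) ∧ f = g + p := by
  constructor
  · intro h
    obtain ⟨e, rfl⟩ := exists_affinePoly_eq hf
    let J := (isQuadraticModule_memQM A).support.radical
    suffices hs : ∃ g, memC A g ∧ affinePoly n e - g ∈ J by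
      obtain ⟨g, hg, k, hk⟩ := hs
      exact ⟨g, affinePoly n e - g, hg, ⟨k + 1, k.succ_pos, by
        rw [pow_succ']
        exact Ideal.mul_mem_left _ _ hk⟩, by ring⟩
    by_contra! hcon
    have h1 : 1 ∉ J := fun h1 =>
      hcon 0 ⟨0, le_rfl, 0, Fin.elim0, by simp⟩ (by simpa using J.mul_mem_left (affinePoly n e) h1)
    obtain ⟨x, hx, hneg⟩ := exists_mem_specSet_eval_neg hsymm h1 e hcon
    exact absurd (h x hx) hneg.not_ge
  · rintro ⟨g, p, hg, ⟨k, -, hp⟩, rfl⟩ x hx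
    rw [map_add, eval_eq_zero_of_pow_memSuppQM hx hp, add_zero]
    exact eval_nonneg_of_memC hx hg
end

section
/- Let L₁ = A_{1,0} + Σᵢ Xᵢ A_{1,i} and L₂ = A_{2,0} + Σᵢ Xᵢ A_{2,i} be linear pencils in n variables of sizes m₁ and m₂ respectively, with A_{1,0} ⪰ 0 and A_{1,0} ≠ 0, and assume the spectrahedron S_{L₁} ⊆ ℝⁿ is bounded and A_{1,0},…,A_{1,n} are linearly independent. Let τ : span(A_{1,0},…,A_{1,n}) → span(A_{2,0},…,A_{2,n}) be the linear map with τ(A_{1,i}) = A_{2,i} for i = 0,…,n. Then: (1) for each d ∈ ℕ, τ is d-positive if and only if 𝔖_{L₁}(d) ⊆ 𝔖_{L₂}(d); (2) τ is completely positive if and only if 𝔖_{L₁}(d) ⊆ 𝔖_{L₂}(d) for all d ∈ ℕ. -/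
open Matrix
open scoped Kronecker

/-- Evaluation of the linear pencil `L = A 0 + Σᵢ Xᵢ A (i+1)` at a tuple `Z` of `d × d`
matrices: `L(Z) = I_d ⊗ A 0 + Σᵢ Zᵢ ⊗ A (i+1)`. -/
def pencilEvalMat {n m : ℕ} (A : Fin (n+1) → Matrix (Fin m) (Fin m) ℝ) {d : ℕ}
    (Z : Fin n → Matrix (Fin d) (Fin d) ℝ) : Matrix (Fin d × Fin m) (Fin d × Fin m) ℝ :=
  (1 : Matrix (Fin d) (Fin d) ℝ) ⊗ₖ A 0 + ∑ i : Fin n, Z i ⊗ₖ A i.succ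

/-- The inclusion `𝔖_{L₁}(d) ⊆ 𝔖_{L₂}(d)` of the `d`-th levels of the matricial
spectrahedra of two pencils. -/
def matricialIncl {n m₁ m₂ : ℕ} (A₁ : Fin (n+1) → Matrix (Fin m₁) (Fin m₁) ℝ)
    (A₂ : Fin (n+1) → Matrix (Fin m₂) (Fin m₂) ℝ) (d : ℕ) : Prop :=
  ∀ Z : Fin n → Matrix (Fin d) (Fin d) ℝ, (∀ i, (Z i).IsSymm) →
    (pencilEvalMat A₁ Z).PosSemidef → (pencilEvalMat A₂ Z).PosSemidef

/-- `d`-positivity of the linear map `τ : span(A₁ᵢ) → span(A₂ᵢ)`, `A₁ᵢ ↦ A₂ᵢ`: since the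
`A₁ᵢ` are linearly independent, a general element of `ℝ^{d×d} ⊗ span(A₁ᵢ)` is uniquely of
the form `Λ ⊗ A₁₀ + Σᵢ Zᵢ ⊗ A₁ᵢ`, and the ampliation `τ_d = I_d ⊗ τ` sends it to
`Λ ⊗ A₂₀ + Σᵢ Zᵢ ⊗ A₂ᵢ`; `τ` is `d`-positive when `τ_d` preserves positive
semidefiniteness. -/
def tauDPos {n m₁ m₂ : ℕ} (A₁ : Fin (n+1) → Matrix (Fin m₁) (Fin m₁) ℝ)
    (A₂ : Fin (n+1) → Matrix (Fin m₂) (Fin m₂) ℝ) (d : ℕ) : Prop :=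
  ∀ (Λ : Matrix (Fin d) (Fin d) ℝ) (Z : Fin n → Matrix (Fin d) (Fin d) ℝ),
    (Λ ⊗ₖ A₁ 0 + ∑ i : Fin n, Z i ⊗ₖ A₁ i.succ).PosSemidef →
    (Λ ⊗ₖ A₂ 0 + ∑ i : Fin n, Z i ⊗ₖ A₂ i.succ).PosSemidef

/-- Compressing the matrix coefficients of `∑ₖ Yₖ ⊗ Aₖ` by `B` preserves positive
semidefiniteness. -/
lemma posSemidef_sum_kronecker_conj {ι p q r : Type*} [Fintype ι] [Fintype p] [Fintype q]
    [Fintype r] [DecidableEq r] {Y : ι → Matrix p p ℝ} {A : ι → Matrix r r ℝ}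
    (h : (∑ k, Y k ⊗ₖ A k).PosSemidef) (B : Matrix p q ℝ) :
    (∑ k, (Bᴴ * Y k * B) ⊗ₖ A k).PosSemidef := by
  have := h.conjTranspose_mul_mul_same (B ⊗ₖ (1 : Matrix r r ℝ))
  simpa only [conjTranspose_kronecker, conjTranspose_one, Matrix.mul_sum, Matrix.sum_mul,
    ← mul_kronecker_mul, Matrix.one_mul, Matrix.mul_one] using this

lemma posSemidef_sum_dotProduct_smul {ι p r : Type*} [Fintype ι] [Fintype p] [Fintype r]
    [DecidableEq r] {Y : ι → Matrix p p ℝ} {A : ι → Matrix r r ℝ}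
    (h : (∑ k, Y k ⊗ₖ A k).PosSemidef) (v : p → ℝ) :
    (∑ k, (v ⬝ᵥ (Y k *ᵥ v)) • A k).PosSemidef := by
  have := (posSemidef_sum_kronecker_conj h (replicateCol Unit v)).submatrix
    (fun j : r => (((), j) : Unit × r))
  convert this using 1
  ext i j
  simp [Matrix.sum_apply, Matrix.mul_assoc, Matrix.mul_apply, dotProduct, mulVec]

/-- If `∑ₖ Yₖ ⊗ Aₖ` is symmetric for linearly independent symmetric `Aₖ`, then every `Yₖ` is
symmetric. -/
lemma isSymm_of_sum_kronecker {ι p r : Type*} [Fintype ι]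
    {Y : ι → Matrix p p ℝ} {A : ι → Matrix r r ℝ} (hA : ∀ k, (A k).IsSymm)
    (hli : LinearIndependent ℝ A) (h : (∑ k, Y k ⊗ₖ A k).IsSymm) (k : ι) : (Y k).IsSymm := by
  ext a b
  rw [transpose_apply]
  refine sub_eq_zero.mp (Fintype.linearIndependent_iff.mp hli (fun k => Y k b a - Y k a b) ?_ k)
  ext i j
  have hij := h.apply (a, i) (b, j)
  simp only [Matrix.sum_apply, kronecker_apply] at hij
  simp only [Matrix.sum_apply, Matrix.smul_apply, smul_eq_mul, sub_mul, Finset.sum_sub_distrib,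
    Matrix.zero_apply, sub_eq_zero]
  rw [← hij]
  exact Finset.sum_congr rfl fun k _ => by rw [(hA k).apply]

lemma isSymm_sum_kronecker {ι p r : Type*} [Fintype ι]
    {Y : ι → Matrix p p ℝ} {A : ι → Matrix r r ℝ} (hY : ∀ k, (Y k).IsSymm)
    (hA : ∀ k, (A k).IsSymm) : (∑ k, Y k ⊗ₖ A k).IsSymm := by
  ext ⟨a, i⟩ ⟨b, j⟩
  simp only [transpose_apply, Matrix.sum_apply, kronecker_apply, (hY _).apply, (hA _).apply]

/-- If the spectrahedron of a pencil with positive semidefinite nonzero constant term is bounded,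
then the constant coefficient of every positive semidefinite element of the span is nonnegative. -/
lemma nonneg_of_posSemidef_sum_smul {n : ℕ} {r : Type*} [Fintype r]
    {A : Fin (n + 1) → Matrix r r ℝ} (hpsd : (A 0).PosSemidef) (hne : A 0 ≠ 0)
    (hbdd : Bornology.IsBounded
      {x : Fin n → ℝ | (A 0 + ∑ i : Fin n, x i • A i.succ).PosSemidef})
    {c : Fin (n + 1) → ℝ} (hc : (∑ k, c k • A k).PosSemidef) : 0 ≤ c 0 := by
  by_contra! hneg
  rw [Fin.sum_univ_succ] at hc
  set T := ∑ i : Fin n, c i.succ • A i.succ with hT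
  have hTpsd : T.PosSemidef := by
    simpa using hc.add (hpsd.smul (neg_nonneg.mpr hneg.le))
  obtain ⟨R, hR⟩ := hbdd.exists_norm_le
  have hzero : (fun i : Fin n => c i.succ) = 0 := by
    by_contra hz
    have hpos := norm_pos_iff.mpr hz
    have hR0 : 0 ≤ R := (norm_nonneg _).trans (hR 0 (by simpa using hpsd))
    have hmem := hR (((R + 1) / ‖fun i : Fin n => c i.succ‖) • fun i : Fin n => c i.succ) (by
      have := hpsd.add (hTpsd.smul
        (show 0 ≤ (R + 1) / ‖fun i : Fin n => c i.succ‖ by positivity))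
      simpa [hT, Finset.smul_sum, smul_smul] using this)
    rw [norm_smul, Real.norm_of_nonneg (by positivity), div_mul_cancel₀ _ hpos.ne'] at hmem
    linarith
  have hT0 : T = 0 := Finset.sum_eq_zero fun i _ => by
    rw [show c i.succ = 0 from congrFun hzero i, zero_smul]
  rw [hT0, add_zero] at hc
  have htr := hc.trace_nonneg
  rw [trace_smul, smul_eq_mul] at htr
  exact hne (hpsd.trace_eq_zero_iff.mp
    (le_antisymm (nonpos_of_mul_nonneg_right htr hneg) hpsd.trace_nonneg))

lemma posSemidef_of_forall_pos_add_smul {r : Type*} [Fintype r] {M N : Matrix r r ℝ}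
    (hM : M.IsHermitian) (h : ∀ ε : ℝ, 0 < ε → (M + ε • N).PosSemidef) : M.PosSemidef := by
  refine .of_dotProduct_mulVec_nonneg hM fun x => ?_
  have hlim : Filter.Tendsto
      (fun ε : ℝ => star x ⬝ᵥ (M *ᵥ x) + ε * (star x ⬝ᵥ (N *ᵥ x))) (nhdsWithin 0 (Set.Ioi 0))
      (nhds (star x ⬝ᵥ (M *ᵥ x))) := by
    refine Filter.Tendsto.mono_left ?_ nhdsWithin_le_nhds
    exact Continuous.tendsto' (by fun_prop) _ _ (by simp)
  refine ge_of_tendsto hlim ?_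
  filter_upwards [self_mem_nhdsWithin] with ε hε
  simpa [add_mulVec, smul_mulVec, dotProduct_add, dotProduct_smul] using
    (h ε hε).dotProduct_mulVec_nonneg x

open scoped MatrixOrder Matrix.Norms.L2Operator in
lemma exists_isUnit_conjTranspose_mul_self {p : Type*} [Fintype p] [DecidableEq p]
    {M : Matrix p p ℝ} (hM : M.PosDef) : ∃ B : Matrix p p ℝ, IsUnit B ∧ M = Bᴴ * B :=
  CStarAlgebra.isStrictlyPositive_iff_eq_star_mul_self.mp hM.isStrictlyPositive

/-- Matricial inclusion at level `d` transfers positive semidefiniteness of homogeneous pencils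
with positive definite leading coefficient. -/
lemma matricialIncl.posSemidef_of_posDef {n m₁ m₂ d : ℕ}
    {A₁ : Fin (n + 1) → Matrix (Fin m₁) (Fin m₁) ℝ}
    {A₂ : Fin (n + 1) → Matrix (Fin m₂) (Fin m₂) ℝ} (hincl : matricialIncl A₁ A₂ d)
    {Y : Fin (n + 1) → Matrix (Fin d) (Fin d) ℝ} (hY : ∀ k, (Y k).IsSymm) (hpos : (Y 0).PosDef)
    (h : (∑ k, Y k ⊗ₖ A₁ k).PosSemidef) : (∑ k, Y k ⊗ₖ A₂ k).PosSemidef := by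
  obtain ⟨B, hB, hYB⟩ := exists_isUnit_conjTranspose_mul_self hpos
  have hdet := (isUnit_iff_isUnit_det B).mp hB
  have hBinv : B⁻¹ * B = 1 := nonsing_inv_mul B hdet
  have hBinv' : B * B⁻¹ = 1 := mul_nonsing_inv B hdet
  have hBH : Bᴴ * (B⁻¹)ᴴ = 1 := by rw [← conjTranspose_mul, hBinv, conjTranspose_one]
  have hBH' : (B⁻¹)ᴴ * Bᴴ = 1 := by rw [← conjTranspose_mul, hBinv', conjTranspose_one]
  have hone : (B⁻¹)ᴴ * Y 0 * B⁻¹ = 1 := by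
    rw [hYB, ← Matrix.mul_assoc, hBH', Matrix.one_mul, hBinv']
  have hback : ∀ k, Bᴴ * ((B⁻¹)ᴴ * Y k * B⁻¹) * B = Y k := fun k => by
    rw [Matrix.mul_assoc, Matrix.mul_assoc _ B⁻¹, hBinv, Matrix.mul_one, ← Matrix.mul_assoc, hBH,
      Matrix.one_mul]
  have hZ := hincl (fun i => (B⁻¹)ᴴ * Y i.succ * B⁻¹)
    (fun i => by
      simp only [Matrix.IsSymm, conjTranspose_eq_transpose_of_trivial, transpose_mul,
        transpose_transpose, (hY i.succ).eq, Matrix.mul_assoc])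
    (by
      have := posSemidef_sum_kronecker_conj h B⁻¹
      rwa [Fin.sum_univ_succ, hone] at this)
  have := posSemidef_sum_kronecker_conj (Y := fun k => (B⁻¹)ᴴ * Y k * B⁻¹) (A := A₂)
    (by rwa [Fin.sum_univ_succ, hone]) B
  simpa only [hback] using this

/-- **Theorem.** Let `L₁, L₂` be linear pencils with `A₁₀ ⪰ 0`, `A₁₀ ≠ 0`, bounded
spectrahedron `S_{L₁}` and linearly independent coefficients `A₁₀, …, A₁ₙ`, and let
`τ : span(A₁ᵢ) → span(A₂ᵢ)` be the linear map `A₁ᵢ ↦ A₂ᵢ`. Then (1) for each `d`, `τ` is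
`d`-positive iff `𝔖_{L₁}(d) ⊆ 𝔖_{L₂}(d)`; and (2) `τ` is completely positive iff
`𝔖_{L₁}(d) ⊆ 𝔖_{L₂}(d)` for all `d`. -/
theorem tau_dPos_iff_matricial_inclusion
    (n m₁ m₂ : ℕ)
    (A₁ : Fin (n+1) → Matrix (Fin m₁) (Fin m₁) ℝ)
    (A₂ : Fin (n+1) → Matrix (Fin m₂) (Fin m₂) ℝ)
    (hsymm₁ : ∀ i, (A₁ i).IsSymm) (hsymm₂ : ∀ i, (A₂ i).IsSymm)
    (hA₀psd : (A₁ 0).PosSemidef) (hA₀ne : A₁ 0 ≠ 0)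
    (hbdd : Bornology.IsBounded
      {x : Fin n → ℝ | (A₁ 0 + ∑ i : Fin n, x i • A₁ i.succ).PosSemidef})
    (hli : LinearIndependent ℝ A₁) :
    (∀ d : ℕ, tauDPos A₁ A₂ d ↔ matricialIncl A₁ A₂ d) ∧
      ((∀ d : ℕ, tauDPos A₁ A₂ d) ↔ (∀ d : ℕ, matricialIncl A₁ A₂ d)) := by
  have key : ∀ d : ℕ, tauDPos A₁ A₂ d ↔ matricialIncl A₁ A₂ d := by
    refine fun d => ⟨fun h Z _ => h 1 Z, fun hincl Λ Z hW => ?_⟩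
    have hcons : ∀ {m : ℕ} (A : Fin (n + 1) → Matrix (Fin m) (Fin m) ℝ)
        (M : Matrix (Fin d) (Fin d) ℝ),
        M ⊗ₖ A 0 + ∑ i : Fin n, Z i ⊗ₖ A i.succ
          = ∑ k, (Fin.cons M Z : Fin (n + 1) → Matrix (Fin d) (Fin d) ℝ) k ⊗ₖ A k := by
      intro m A M
      simp [Fin.sum_univ_succ]
    rw [hcons] at hW ⊢
    have hY := isSymm_of_sum_kronecker hsymm₁ hli (isHermitian_iff_isSymm.mp hW.isHermitian)
    have hΛ : Λ.PosSemidef := by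
      refine .of_dotProduct_mulVec_nonneg (isHermitian_iff_isSymm.mpr (hY 0)) fun v => ?_
      exact nonneg_of_posSemidef_sum_smul hA₀psd hA₀ne hbdd (posSemidef_sum_dotProduct_smul hW v)
    refine posSemidef_of_forall_pos_add_smul (N := (1 : Matrix (Fin d) (Fin d) ℝ) ⊗ₖ A₂ 0)
      (isHermitian_iff_isSymm.mpr (isSymm_sum_kronecker hY hsymm₂)) fun ε hε => ?_
    have hshift : ∀ {m : ℕ} (A : Fin (n + 1) → Matrix (Fin m) (Fin m) ℝ),
        ∑ k, (Fin.cons Λ Z : Fin (n + 1) → Matrix (Fin d) (Fin d) ℝ) k ⊗ₖ A k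
            + ε • ((1 : Matrix (Fin d) (Fin d) ℝ) ⊗ₖ A 0)
          = ∑ k, (Fin.cons (Λ + ε • 1) Z : Fin (n + 1) → Matrix (Fin d) (Fin d) ℝ) k ⊗ₖ A k := by
      intro m A
      rw [← hcons, ← hcons, add_kronecker, smul_kronecker, add_right_comm]
    rw [hshift]
    have hpos : (Λ + ε • (1 : Matrix (Fin d) (Fin d) ℝ)).PosDef :=
      Matrix.PosDef.posSemidef_add hΛ (Matrix.PosDef.one.smul hε)
    refine hincl.posSemidef_of_posDef
      (Fin.cases (isHermitian_iff_isSymm.mp hpos.isHermitian) fun i => hY i.succ) hpos ?_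
    rw [← hshift]
    exact hW.add ((PosSemidef.one.kronecker hA₀psd).smul hε.le)
  exact ⟨key, forall_congr' key⟩
end
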